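/- (Hartogs lemma for α-subharmonic functions) Let {u_j} be a sequence of α-subharmonic functions in a domain D ⊂ ℂⁿ which is locally uniformly bounded from above, and assume limsup_{j→∞} u_j(z) ≤ g(z) for every z ∈ D, where g is continuous on D. Then for every compact set K ⋐ D and every ε > 0 there exists j₀ ∈ ℕ such that u_j(z) ≤ g(z) + ε for all z ∈ K and all j ≥ j₀. -/

import Mathlib

open MeasureTheory Filter Topology Complex Metric

noncomputable section

/-- Complex `n`-space. -/
abbrev Cn (n : ℕ) := Fin n → ℂ

/-- The Wirtinger derivative `∂f/∂z_j` of a (real-differentiable) function `f : ℂⁿ → ℂ`. -/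
noncomputable def wdz {n : ℕ} (j : Fin n) (f : Cn n → ℂ) (z : Cn n) : ℂ :=
  (fderiv ℝ f z (Pi.single j 1) - Complex.I * fderiv ℝ f z (Pi.single j Complex.I)) / 2

/-- The Wirtinger derivative `∂f/∂z̄_j` of a (real-differentiable) function `f : ℂⁿ → ℂ`. -/
noncomputable def wdzbar {n : ℕ} (j : Fin n) (f : Cn n → ℂ) (z : Cn n) : ℂ :=
  (fderiv ℝ f z (Pi.single j 1) + Complex.I * fderiv ℝ f z (Pi.single j Complex.I)) / 2

/-- The square of the Euclidean norm `|z|² = ∑ |z_i|²` on `ℂⁿ`. -/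
noncomputable def sqNorm {n : ℕ} (z : Cn n) : ℝ := ∑ i, Complex.normSq (z i)

/-- A closed, strictly positive differential form `α` of bidegree `(n-1, n-1)` with `C¹`
coefficients on `ℂⁿ`, recorded through its normalized coefficient matrix:  `coeff j k` is
the Hermitian positive-definite matrix `A_{jk}` such that
`dd^c u ∧ α = (∑_{j,k} A_{jk} ∂²u/∂z_j∂z̄_k) dV`.  In these terms closedness of `α`
reads `∑_j ∂A_{jk}/∂z_j = 0` for every `k` (the conjugate identity follows by
Hermitian symmetry). -/
structure AlphaForm (n : ℕ) where
  coeff : Fin n → Fin n → Cn n → ℂ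
  contDiff : ∀ j k, ContDiff ℝ 1 (coeff j k)
  hermitian : ∀ j k z, coeff k j z = starRingEnd ℂ (coeff j k z)
  strictlyPositive : ∀ z : Cn n, ∀ ξ : Fin n → ℂ, ξ ≠ 0 →
    0 < (∑ j, ∑ k, coeff j k z * ξ j * starRingEnd ℂ (ξ k)).re
  closed : ∀ k, ∀ z : Cn n, (∑ j, wdz j (coeff j k) z) = 0

/-- The second order operator `f ↦ ∑_{j,k} A_{jk} ∂²f/∂z_j∂z̄_k` representing the
top-degree form `dd^c f ∧ α` (with respect to Lebesgue measure). -/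
noncomputable def alphaOp {n : ℕ} (A : AlphaForm n) (f : Cn n → ℂ) (z : Cn n) : ℂ :=
  ∑ j, ∑ k, A.coeff j k z * wdzbar k (wdz j f) z

/-- The operator `alphaOp` applied to a real-valued function, returning the real part. -/
noncomputable def alphaOpR {n : ℕ} (A : AlphaForm n) (ω : Cn n → ℝ) (z : Cn n) : ℝ :=
  (alphaOp A (fun w => (ω w : ℂ)) z).re

/-- `u : ℂⁿ → EReal` is `α`-subharmonic on `D`: it is finite-or-`-∞`, strongly upper
semicontinuous on `D`, locally integrable on `D`, and the current `dd^c u ∧ α` is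
positive, i.e. `∫_D u · (α ∧ dd^c ω) ≥ 0` for every nonnegative test function `ω` on `D`. -/
def IsAlphaSubharmonicE {n : ℕ} (A : AlphaForm n) (D : Set (Cn n)) (u : Cn n → EReal) : Prop :=
  (∀ z ∈ D, u z ≠ ⊤) ∧
  UpperSemicontinuousOn u D ∧
  (∀ z₀ ∈ D, ∀ S : Set (Cn n),
      (∃ N ∈ 𝓝 z₀, volume (N \ S) = 0) → Filter.limsup u (𝓝[S] z₀) = u z₀) ∧
  LocallyIntegrableOn (fun z => (u z).toReal) D volume ∧
  ∀ ω : Cn n → ℝ, ContDiff ℝ (⊤ : ℕ∞) ω → HasCompactSupport ω → tsupport ω ⊆ D →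
    (∀ z, 0 ≤ ω z) → 0 ≤ ∫ z in D, (u z).toReal * alphaOpR A ω z

/-- A real-valued function is `α`-subharmonic on `D` if it is so as an `EReal`-valued
function. -/
def IsAlphaSubharmonic {n : ℕ} (A : AlphaForm n) (D : Set (Cn n)) (u : Cn n → ℝ) : Prop :=
  IsAlphaSubharmonicE A D (fun z => (u z : EReal))

/-- `h` is `α`-harmonic on the open set `U`: `dd^c h ∧ α = 0` there, in the sense of
currents. -/
def IsAlphaHarmonicOn {n : ℕ} (A : AlphaForm n) (U : Set (Cn n)) (h : Cn n → ℝ) : Prop :=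
  LocallyIntegrableOn h U volume ∧
  ∀ ω : Cn n → ℝ, ContDiff ℝ (⊤ : ℕ∞) ω → HasCompactSupport ω → tsupport ω ⊆ U →
    (∫ z in U, h z * alphaOpR A ω z) = 0

/-- `u` is strictly `α`-subharmonic on `G`: for every compact subdomain `G' ⋐ G` there is
`ε > 0` with `u - ε|z|²` `α`-subharmonic on `G'`. -/
def IsStrictlyAlphaSubharmonic {n : ℕ} (A : AlphaForm n) (G : Set (Cn n)) (u : Cn n → ℝ) :
    Prop :=
  ∀ G' : Set (Cn n), IsOpen G' → IsCompact (closure G') → closure G' ⊆ G →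
    ∃ ε > (0 : ℝ), IsAlphaSubharmonic A G' (fun z => u z - ε * sqNorm z)

/-- `D` is a bounded `α`-regular domain: a bounded domain carrying a negative
`α`-subharmonic exhaustion `ρ` with boundary limit `0`. -/
def IsAlphaRegularDomain {n : ℕ} (A : AlphaForm n) (D : Set (Cn n)) : Prop :=
  IsOpen D ∧ IsConnected D ∧ Bornology.IsBounded D ∧
  ∃ ρ : Cn n → ℝ, IsAlphaSubharmonic A D ρ ∧ (∀ z ∈ D, ρ z < 0) ∧
    ∀ ζ ∈ frontier D, Filter.Tendsto ρ (𝓝[D] ζ) (𝓝 0)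

/-- `D` is a strongly `α`-regular domain: `D = {ρ < 0}` for some `ρ` which is `C²` and
strictly `α`-subharmonic on a neighborhood `D⁺` of `closure D`. -/
def IsStronglyAlphaRegularDomain {n : ℕ} (A : AlphaForm n) (D : Set (Cn n)) : Prop :=
  IsOpen D ∧ IsConnected D ∧ Bornology.IsBounded D ∧
  ∃ Dp : Set (Cn n), IsOpen Dp ∧ closure D ⊆ Dp ∧
    ∃ ρ : Cn n → ℝ, ContDiffOn ℝ 2 ρ Dp ∧ IsStrictlyAlphaSubharmonic A Dp ρ ∧
      D = {z ∈ Dp | ρ z < 0}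

/-- The class `U(E, D, ψ)` of `α`-subharmonic functions `u` on `D` with `u ≤ ψ` on `E`
and `u < 0` on `D`. -/
def Uclass {n : ℕ} (A : AlphaForm n) (E D : Set (Cn n)) (ψ : Cn n → ℝ) :
    Set (Cn n → ℝ) :=
  {u | IsAlphaSubharmonic A D u ∧ (∀ z ∈ E, u z ≤ ψ z) ∧ ∀ z ∈ D, u z < 0}

/-- The weighted extremal function `ω_α(z, E, D, ψ)`. -/
noncomputable def omegaW {n : ℕ} (A : AlphaForm n) (E D : Set (Cn n)) (ψ : Cn n → ℝ)
    (z : Cn n) : ℝ :=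
  sSup ((fun u : Cn n → ℝ => u z) '' Uclass A E D ψ)

/-- The weighted `α`-subharmonic measure `ω*_α(z, E, D, ψ)`: the upper semicontinuous
regularization of `ω_α(·, E, D, ψ)`. -/
noncomputable def omegaWStar {n : ℕ} (A : AlphaForm n) (E D : Set (Cn n)) (ψ : Cn n → ℝ)
    (z : Cn n) : ℝ :=
  Filter.limsup (omegaW A E D ψ) (𝓝 z)

/-- The (unweighted) extremal function `ω_α(z, E, D)`. -/
noncomputable def omega0 {n : ℕ} (A : AlphaForm n) (E D : Set (Cn n)) : Cn n → ℝ :=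
  omegaW A E D (fun _ => (-1 : ℝ))

/-- The (unweighted) `α`-subharmonic measure `ω*_α(z, E, D)`. -/
noncomputable def omega0Star {n : ℕ} (A : AlphaForm n) (E D : Set (Cn n)) : Cn n → ℝ :=
  omegaWStar A E D (fun _ => (-1 : ℝ))

/-- `S` is `α`-polar in `D`: there is an `α`-subharmonic `ρ` on `D`, not identically
`-∞`, with `ρ = -∞` on `S`. -/
def IsAlphaPolar {n : ℕ} (A : AlphaForm n) (D S : Set (Cn n)) : Prop :=
  ∃ ρ : Cn n → EReal, IsAlphaSubharmonicE A D ρ ∧ (∃ z ∈ D, ρ z ≠ ⊥) ∧ ∀ z ∈ S, ρ z = ⊥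

/-- `u` is plurisubharmonic on `D`: upper semicontinuous, locally integrable, and with
positive semidefinite complex Hessian in the sense of distributions. -/
def IsPlurisubharmonic {n : ℕ} (D : Set (Cn n)) (u : Cn n → ℝ) : Prop :=
  UpperSemicontinuousOn u D ∧ LocallyIntegrableOn u D volume ∧
  ∀ ξ : Fin n → ℂ, ∀ ω : Cn n → ℝ, ContDiff ℝ (⊤ : ℕ∞) ω → HasCompactSupport ω →
    tsupport ω ⊆ D → (∀ z, 0 ≤ ω z) →
    0 ≤ ∫ z in D, u z *
      (∑ j, ∑ k, ξ j * starRingEnd ℂ (ξ k) * wdzbar k (wdz j (fun w => (ω w : ℂ))) z).re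

/-- The class `U(E,D)` for the plurisubharmonic measure. -/
def UclassPsh {n : ℕ} (E D : Set (Cn n)) : Set (Cn n → ℝ) :=
  {u | IsPlurisubharmonic D u ∧ (∀ z ∈ E, u z ≤ -1) ∧ ∀ z ∈ D, u z < 0}

/-- The plurisubharmonic extremal function `ω(z, E, D)`. -/
noncomputable def omegaPsh {n : ℕ} (E D : Set (Cn n)) (z : Cn n) : ℝ :=
  sSup ((fun u : Cn n → ℝ => u z) '' UclassPsh E D)

/-- The plurisubharmonic measure `ω*(z, E, D)`. -/
noncomputable def omegaPshStar {n : ℕ} (E D : Set (Cn n)) (z : Cn n) : ℝ :=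
  Filter.limsup (omegaPsh E D) (𝓝 z)

end

/-!
Fix a center `a` and freeze the coefficients of `α` at `a`. With `d` the distance of the Hermitian
metric so obtained, take a function of `d ^ 2` whose derivative is that of the fundamental solution,
cut off near the pole at scale `s` and at a fixed outer radius `R`. The outer cutoff
`exp (-1 / (R - d))` has a derivative so much larger than itself that it absorbs the error made by
freezing `C¹` coefficients. The operator of `α` therefore maps this test function to some `h` that
is negative only in a ball of radius comparable to `s`, where `h` is of order `-s⁻²ⁿ`, and whose
positive part is `O(|z - a|¹⁻²ⁿ)`, uniformly in `s` and `a`. As `α` is closed, `∫ h = 0`. Testing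
`dd^c u ∧ α ≥ 0` with it and letting `s → 0` at a Lebesgue point `a` of `u` bounds `u(a) - c` by a
multiple of `∫ (u - c)⁺ |z - a|¹⁻²ⁿ`. Splitting off the integrable singularity gives, for `u`
bounded above, `u(a) ≤ c + δ + Λ ∫ (u - c)⁺` with `Λ` independent of `u`.

For `u = u_j` and `c` slightly larger than `g` near a point, the last integral tends to `0` by
dominated convergence. Strong upper semicontinuity extends the bound from almost every `a` to all.
-/

open scoped Matrix

section WirtingerCalculus

variable {n : ℕ} {f g : Cn n → ℂ} {a b a' b' : Fin n → ℂ} {z : Cn n}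

/-- The real-linear map `v ↦ ∑ aᵢ vᵢ + ∑ bᵢ v̄ᵢ`, i.e. the covector `∑ aᵢ dzᵢ + ∑ bᵢ dz̄ᵢ`. -/
noncomputable def wirtingerCLM (a b : Fin n → ℂ) : Cn n →L[ℝ] ℂ :=
  ∑ i, (a i • ContinuousLinearMap.proj (R := ℝ) i +
    b i • (conjCLE : ℂ →L[ℝ] ℂ).comp (ContinuousLinearMap.proj (R := ℝ) i))

lemma wirtingerCLM_apply (a b : Fin n → ℂ) (v : Cn n) :
    wirtingerCLM a b v = ∑ i, (a i * v i + b i * starRingEnd ℂ (v i)) := by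
  simp [wirtingerCLM]

lemma wirtingerCLM_single (a b : Fin n → ℂ) (j : Fin n) (c : ℂ) :
    wirtingerCLM a b (Pi.single j c) = a j * c + b j * starRingEnd ℂ c := by
  rw [wirtingerCLM_apply, Finset.sum_eq_single j] <;> simp +contextual

/-- `df = ∑ aᵢ dzᵢ + ∑ bᵢ dz̄ᵢ` at `z`: the function `f` is real-differentiable at `z` with
Wirtinger derivatives `aᵢ = ∂f/∂zᵢ` and `bᵢ = ∂f/∂z̄ᵢ`. -/
def HasWirtingerDerivAt (f : Cn n → ℂ) (a b : Fin n → ℂ) (z : Cn n) : Prop :=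
  HasFDerivAt f (wirtingerCLM a b) z

namespace HasWirtingerDerivAt

lemma wdz_eq (hf : HasWirtingerDerivAt f a b z) (j : Fin n) : wdz j f z = a j := by
  rw [wdz, HasFDerivAt.fderiv hf, wirtingerCLM_single, wirtingerCLM_single]
  simp only [map_one, conj_I]
  linear_combination (-(a j - b j) / 2) * I_mul_I

lemma wdzbar_eq (hf : HasWirtingerDerivAt f a b z) (j : Fin n) : wdzbar j f z = b j := by
  rw [wdzbar, HasFDerivAt.fderiv hf, wirtingerCLM_single, wirtingerCLM_single]
  simp only [map_one, conj_I]
  linear_combination ((a j - b j) / 2) * I_mul_I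

lemma mul (hf : HasWirtingerDerivAt f a b z) (hg : HasWirtingerDerivAt g a' b' z) :
    HasWirtingerDerivAt (fun w => f w * g w) (f z • a' + g z • a) (f z • b' + g z • b) z := by
  refine (HasFDerivAt.mul hf hg).congr_fderiv (ContinuousLinearMap.ext fun v => ?_)
  simp only [_root_.add_apply, _root_.smul_apply, wirtingerCLM_apply, smul_eq_mul, Pi.add_apply,
    Pi.smul_apply, Finset.mul_sum, ← Finset.sum_add_distrib]
  exact Finset.sum_congr rfl fun i _ => by ring

lemma fun_sum {ι : Type*} {s : Finset ι} {f : ι → Cn n → ℂ} {a b : ι → Fin n → ℂ}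
    (hf : ∀ i ∈ s, HasWirtingerDerivAt (f i) (a i) (b i) z) :
    HasWirtingerDerivAt (fun w => ∑ i ∈ s, f i w) (∑ i ∈ s, a i) (∑ i ∈ s, b i) z := by
  refine (HasFDerivAt.fun_sum hf).congr_fderiv (ContinuousLinearMap.ext fun v => ?_)
  simp only [_root_.sum_apply, wirtingerCLM_apply, Finset.sum_apply, Finset.sum_mul,
    ← Finset.sum_add_distrib]
  exact Finset.sum_comm

lemma ofReal_comp {p : Cn n → ℝ} (hp : HasWirtingerDerivAt (fun w => (p w : ℂ)) a b z)
    {F : ℝ → ℝ} {F' : ℝ} (hF : HasDerivAt F F' (p z)) :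
    HasWirtingerDerivAt (fun w => (F (p w) : ℂ)) ((F' : ℂ) • a) ((F' : ℂ) • b) z := by
  have hre : HasFDerivAt p (reCLM.comp (wirtingerCLM a b)) z :=
    (reCLM.hasFDerivAt.comp z hp :)
  have hreal (v) : ((wirtingerCLM a b v).re : ℂ) = wirtingerCLM a b v :=
    DFunLike.congr_fun ((ofRealCLM.hasFDerivAt.comp z hre).unique hp) v
  refine ((ofRealCLM.hasFDerivAt.comp z (hF.comp_hasFDerivAt z hre) :)).congr_fderiv
    (ContinuousLinearMap.ext fun v => ?_)
  simp only [ContinuousLinearMap.comp_apply, _root_.smul_apply, reCLM_apply, ofRealCLM_apply,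
    smul_eq_mul, ofReal_mul, hreal]
  simp only [wirtingerCLM_apply, Finset.mul_sum, Pi.smul_apply, smul_eq_mul, mul_add, mul_assoc]

end HasWirtingerDerivAt

lemma hasWirtingerDerivAt_coord_sub (w : Cn n) (j : Fin n) :
    HasWirtingerDerivAt (fun z => z j - w j) (Pi.single j 1) 0 z := by
  refine ((ContinuousLinearMap.proj (R := ℝ) (φ := fun _ : Fin n => ℂ) j).hasFDerivAt.sub_const
    _).congr_fderiv (ContinuousLinearMap.ext fun v => ?_)
  simp [wirtingerCLM_apply, Pi.single_apply]

lemma hasWirtingerDerivAt_star_sub_vecMul (H : Matrix (Fin n) (Fin n) ℂ) (w : Cn n) (j : Fin n) :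
    HasWirtingerDerivAt (fun z => (star (z - w) ᵥ* H) j) 0 (fun k => H k j) z := by
  have hlin : HasFDerivAt (fun z => wirtingerCLM 0 (fun k => H k j) (z - w))
      (wirtingerCLM 0 fun k => H k j) z :=
    ((wirtingerCLM 0 fun k => H k j).hasFDerivAt.comp z ((hasFDerivAt_id z).sub_const w) :)
  refine hlin.congr_of_eventuallyEq (.of_forall fun x => ?_)
  simp [wirtingerCLM_apply, Matrix.vecMul, dotProduct, mul_comm]

/-- The quadratic form `x ↦ Re (x* H x)` of a complex matrix. -/
noncomputable def hermForm (H : Matrix (Fin n) (Fin n) ℂ) (x : Cn n) : ℝ := (star x ⬝ᵥ H *ᵥ x).re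

lemma ofReal_hermForm {H : Matrix (Fin n) (Fin n) ℂ} (hH : H.IsHermitian) (x : Cn n) :
    (hermForm H x : ℂ) = star x ⬝ᵥ H *ᵥ x :=
  Complex.ext rfl (hH.im_star_dotProduct_mulVec_self x).symm

lemma hasWirtingerDerivAt_hermForm_sub {H : Matrix (Fin n) (Fin n) ℂ} (hH : H.IsHermitian)
    (w : Cn n) :
    HasWirtingerDerivAt (fun z => (hermForm H (z - w) : ℂ)) (star (z - w) ᵥ* H)
      (H *ᵥ (z - w)) z := by
  have hprod := HasWirtingerDerivAt.fun_sum (z := z) (s := Finset.univ) fun j _ =>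
    (hasWirtingerDerivAt_star_sub_vecMul H w j).mul (hasWirtingerDerivAt_coord_sub w j)
  convert hprod using 1
  · funext x
    rw [ofReal_hermForm hH, Matrix.dotProduct_mulVec]
    rfl
  · funext k
    simp [Pi.single_apply]
  · funext k
    simp [Matrix.mulVec, dotProduct, mul_comm]

lemma wdzbar_wdz_comp_hermForm {H : Matrix (Fin n) (Fin n) ℂ} (hH : H.IsHermitian) (w : Cn n)
    {F F' F'' : ℝ → ℝ} (hF : ∀ t, HasDerivAt F (F' t) t) (hF' : ∀ t, HasDerivAt F' (F'' t) t)
    (j k : Fin n) (z : Cn n) :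
    wdzbar k (wdz j fun x => (F (hermForm H (x - w)) : ℂ)) z =
      F'' (hermForm H (z - w)) * ((star (z - w) ᵥ* H) j * (H *ᵥ (z - w)) k) +
        F' (hermForm H (z - w)) * H k j := by
  have hwdz : (wdz j fun x => (F (hermForm H (x - w)) : ℂ)) =
      fun x => F' (hermForm H (x - w)) * (star (x - w) ᵥ* H) j := funext fun x =>
    ((hasWirtingerDerivAt_hermForm_sub hH w).ofReal_comp (hF _)).wdz_eq j
  rw [hwdz, (((hasWirtingerDerivAt_hermForm_sub hH w).ofReal_comp (hF' _)).mul
    (hasWirtingerDerivAt_star_sub_vecMul H w j)).wdzbar_eq k]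
  simp only [Pi.add_apply, Pi.smul_apply, smul_eq_mul]
  ring

end WirtingerCalculus

/-- The coefficient matrix of `α` at the point `z`. -/
noncomputable def AlphaForm.matrix {n : ℕ} (A : AlphaForm n) (z : Cn n) :
    Matrix (Fin n) (Fin n) ℂ :=
  Matrix.of fun j k => A.coeff j k z

lemma alphaOpR_comp_hermForm {n : ℕ} (A : AlphaForm n) {H : Matrix (Fin n) (Fin n) ℂ}
    (hH : H.IsHermitian) (w : Cn n) {F F' F'' : ℝ → ℝ} (hF : ∀ t, HasDerivAt F (F' t) t)
    (hF' : ∀ t, HasDerivAt F' (F'' t) t) (z : Cn n) :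
    alphaOpR A (fun x => F (hermForm H (x - w))) z =
      F'' (hermForm H (z - w)) * hermForm (H * A.matrix z * H) (z - w) +
        F' (hermForm H (z - w)) * (A.matrix z * H).trace.re := by
  have hsum : star (z - w) ⬝ᵥ (H * A.matrix z * H) *ᵥ (z - w) =
      ∑ j, ∑ k, A.coeff j k z * ((star (z - w) ᵥ* H) j * (H *ᵥ (z - w)) k) := by
    rw [mul_assoc, ← Matrix.mulVec_mulVec, Matrix.dotProduct_mulVec, ← Matrix.mulVec_mulVec]
    generalize star (z - w) ᵥ* H = v, H *ᵥ (z - w) = y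
    simp only [dotProduct, Matrix.mulVec, Finset.mul_sum, AlphaForm.matrix, Matrix.of_apply]
    exact Finset.sum_congr rfl fun j _ => Finset.sum_congr rfl fun k _ => by ring
  have htrace : (A.matrix z * H).trace = ∑ j, ∑ k, A.coeff j k z * H k j := by
    simp [Matrix.trace, Matrix.mul_apply, AlphaForm.matrix]
  have hop : alphaOp A (fun x => (F (hermForm H (x - w)) : ℂ)) z =
      F'' (hermForm H (z - w)) * (star (z - w) ⬝ᵥ (H * A.matrix z * H) *ᵥ (z - w)) +
        F' (hermForm H (z - w)) * (A.matrix z * H).trace := by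
    simp only [alphaOp, wdzbar_wdz_comp_hermForm hH w hF hF', hsum, htrace, Finset.mul_sum,
      ← Finset.sum_add_distrib]
    exact Finset.sum_congr rfl fun j _ => Finset.sum_congr rfl fun k _ => by ring
  rw [alphaOpR, hop, add_re, re_ofReal_mul, re_ofReal_mul]
  rfl

section DivergenceForm

variable {n : ℕ} {f g : Cn n → ℂ} {ω : Cn n → ℝ}

lemma contDiff_wdz (hf : ContDiff ℝ 2 f) (j : Fin n) : ContDiff ℝ 1 (wdz j f) := by
  have : ContDiff ℝ 1 (fderiv ℝ f) := hf.fderiv_right le_rfl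
  unfold wdz
  fun_prop

lemma continuous_wdzbar (hf : ContDiff ℝ 1 f) (j : Fin n) : Continuous (wdzbar j f) := by
  have : Continuous (fderiv ℝ f) := hf.continuous_fderiv one_ne_zero
  unfold wdzbar
  fun_prop

lemma wdz_eq_zero_of_notMem_tsupport {z : Cn n} (hz : z ∉ tsupport f) (j : Fin n) :
    wdz j f z = 0 := by
  simp [wdz, fderiv_of_notMem_tsupport (𝕜 := ℝ) hz]

lemma tsupport_wdz_subset (f : Cn n → ℂ) (j : Fin n) : tsupport (wdz j f) ⊆ tsupport f :=
  closure_minimal (fun _ hz => by_contra fun h => hz (wdz_eq_zero_of_notMem_tsupport h j))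
    (isClosed_tsupport f)

lemma wdzbar_eq_zero_of_notMem_tsupport {z : Cn n} (hz : z ∉ tsupport f) (j : Fin n) :
    wdzbar j f z = 0 := by
  simp [wdzbar, fderiv_of_notMem_tsupport (𝕜 := ℝ) hz]

lemma wdzbar_mul {z : Cn n} (hf : DifferentiableAt ℝ f z) (hg : DifferentiableAt ℝ g z)
    (j : Fin n) :
    wdzbar j (fun w => f w * g w) z = f z * wdzbar j g z + wdzbar j f z * g z := by
  simp only [wdzbar, fderiv_fun_mul hf hg, _root_.add_apply, _root_.smul_apply, smul_eq_mul]
  ring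

lemma wdzbar_conj (f : Cn n → ℂ) (j : Fin n) (z : Cn n) :
    wdzbar j (fun w => starRingEnd ℂ (f w)) z = starRingEnd ℂ (wdz j f z) := by
  have hfderiv : fderiv ℝ (fun w => starRingEnd ℂ (f w)) z =
      (conjCLE : ℂ →L[ℝ] ℂ).comp (fderiv ℝ f z) := conjCLE.comp_fderiv
  simp [wdzbar, wdz, hfderiv, map_ofNat (starRingEnd ℂ) 2]

lemma integrable_wdzbar (hf : ContDiff ℝ 1 f) (hc : HasCompactSupport f) (j : Fin n) :
    Integrable (wdzbar j f) :=
  (continuous_wdzbar hf j).integrable_of_hasCompactSupport <|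
    .intro hc fun _ hz => wdzbar_eq_zero_of_notMem_tsupport hz j

lemma integral_wdzbar_eq_zero (hf : ContDiff ℝ 1 f) (hc : HasCompactSupport f) (j : Fin n) :
    ∫ z, wdzbar j f z = 0 := by
  have hint (v : Cn n) : Integrable (fun z => fderiv ℝ f z v) :=
    ((hf.continuous_fderiv one_ne_zero).clm_apply continuous_const).integrable_of_hasCompactSupport
      (hc.fderiv_apply (𝕜 := ℝ) v)
  have hzero (v : Cn n) : ∫ z, fderiv ℝ f z v = 0 := by
    simpa using integral_mul_fderiv_eq_neg_fderiv_mul_of_integrable (f := fun _ => (1 : ℂ)) (v := v)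
      (by simp) (by simpa using hint v)
      (by simpa using hf.continuous.integrable_of_hasCompactSupport hc)
      (fun _ _ => differentiableAt_const _) (fun z _ => hf.differentiable one_ne_zero z)
  simp only [wdzbar, integral_div, integral_add (hint _) ((hint _).const_mul _),
    integral_const_mul, hzero, mul_zero, add_zero, zero_div]

lemma tsupport_ofReal_comp (ω : Cn n → ℝ) : tsupport (fun w => (ω w : ℂ)) = tsupport ω :=
  tsupport_comp_eq ofReal_eq_zero ω

namespace AlphaForm

variable (A : AlphaForm n)

lemma sum_wdzbar_coeff (j : Fin n) (z : Cn n) : ∑ k, wdzbar k (A.coeff j k) z = 0 := by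
  have hconj (k) : A.coeff j k = fun w => starRingEnd ℂ (A.coeff k j w) :=
    funext fun w => A.hermitian k j w
  simp only [hconj, wdzbar_conj, ← map_sum, A.closed, map_zero]

-- Closedness of `α` makes the second order operator a divergence.
lemma alphaOp_eq_sum_wdzbar (hf : ContDiff ℝ 2 f) (z : Cn n) :
    alphaOp A f z = ∑ j, ∑ k, wdzbar k (fun w => A.coeff j k w * wdz j f w) z := by
  refine Finset.sum_congr rfl fun j _ => ?_
  simp only [fun k => wdzbar_mul ((A.contDiff j k).differentiable one_ne_zero z)
      ((contDiff_wdz hf j).differentiable one_ne_zero z) k,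
    Finset.sum_add_distrib, ← Finset.sum_mul, sum_wdzbar_coeff, zero_mul, add_zero]

lemma continuous_alphaOp (hf : ContDiff ℝ 2 f) : Continuous (alphaOp A f) := by
  unfold alphaOp
  exact continuous_finsetSum _ fun j _ => continuous_finsetSum _ fun k _ =>
    (A.contDiff j k).continuous.mul (continuous_wdzbar (contDiff_wdz hf j) k)

lemma alphaOp_eq_zero_of_notMem_tsupport {z : Cn n} (hz : z ∉ tsupport f) : alphaOp A f z = 0 :=
  Finset.sum_eq_zero fun j _ => Finset.sum_eq_zero fun k _ => by
    rw [wdzbar_eq_zero_of_notMem_tsupport fun h => hz (tsupport_wdz_subset f j h), mul_zero]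

lemma integral_alphaOp (hf : ContDiff ℝ 2 f) (hc : HasCompactSupport f) :
    ∫ z, alphaOp A f z = 0 := by
  have hC (j k) : ContDiff ℝ 1 fun w => A.coeff j k w * wdz j f w :=
    (A.contDiff j k).mul (contDiff_wdz hf j)
  have hsupp (j k) : HasCompactSupport fun w => A.coeff j k w * wdz j f w :=
    .intro hc fun z hz => by rw [wdz_eq_zero_of_notMem_tsupport hz, mul_zero]
  have hint (j k) := integrable_wdzbar (hC j k) (hsupp j k) k
  simp_rw [A.alphaOp_eq_sum_wdzbar hf]
  rw [integral_finsetSum _ fun j _ => integrable_finsetSum _ fun k _ => hint j k]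
  refine Finset.sum_eq_zero fun j _ => ?_
  rw [integral_finsetSum _ fun k _ => hint j k]
  exact Finset.sum_eq_zero fun k _ => integral_wdzbar_eq_zero (hC j k) (hsupp j k) k

lemma continuous_alphaOpR (hω : ContDiff ℝ 2 ω) : Continuous (alphaOpR A ω) :=
  continuous_re.comp (A.continuous_alphaOp (ofRealCLM.contDiff.comp hω))

lemma alphaOpR_eq_zero_of_notMem_tsupport {z : Cn n} (hz : z ∉ tsupport ω) :
    alphaOpR A ω z = 0 := by
  rw [alphaOpR, A.alphaOp_eq_zero_of_notMem_tsupport (by rwa [tsupport_ofReal_comp]), zero_re]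

lemma hasCompactSupport_alphaOpR (hc : HasCompactSupport ω) : HasCompactSupport (alphaOpR A ω) :=
  .intro hc fun _ hz => A.alphaOpR_eq_zero_of_notMem_tsupport hz

lemma integral_alphaOpR (hω : ContDiff ℝ 2 ω) (hc : HasCompactSupport ω) :
    ∫ z, alphaOpR A ω z = 0 := by
  have hωC : ContDiff ℝ 2 fun w => (ω w : ℂ) := ofRealCLM.contDiff.comp hω
  have hcC : HasCompactSupport fun w => (ω w : ℂ) := hc.comp_left ofReal_zero
  have hint : Integrable (alphaOp A fun w => (ω w : ℂ)) :=
    (A.continuous_alphaOp hωC).integrable_of_hasCompactSupport <|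
      .intro hcC fun _ hz => A.alphaOp_eq_zero_of_notMem_tsupport hz
  calc ∫ z, alphaOpR A ω z = (∫ z, alphaOp A (fun w => (ω w : ℂ)) z).re := integral_re hint
    _ = 0 := by rw [A.integral_alphaOp hωC hcC, zero_re]

end AlphaForm

end DivergenceForm

section CoefficientMatrix

open scoped Matrix.Norms.Operator ComplexOrder NNReal

variable {n : ℕ}

lemma norm_dotProduct_le (x y : Cn n) : ‖x ⬝ᵥ y‖ ≤ n * (‖x‖ * ‖y‖) := by
  calc ‖x ⬝ᵥ y‖ ≤ ∑ i, ‖x i * y i‖ := norm_sum_le _ _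
    _ ≤ ∑ _i : Fin n, ‖x‖ * ‖y‖ := Finset.sum_le_sum fun i _ => by
        rw [norm_mul]; gcongr <;> exact norm_le_pi_norm _ i
    _ = n * (‖x‖ * ‖y‖) := by simp

lemma norm_trace_le (M : Matrix (Fin n) (Fin n) ℂ) : ‖M.trace‖ ≤ n * ‖M‖ := by
  have hentry (i) : ‖M i i‖ ≤ ‖M‖ := by
    calc ‖M i i‖ = ‖(M *ᵥ Pi.single i 1) i‖ := by rw [Matrix.mulVec_single_one, Matrix.col_apply]
      _ ≤ ‖M *ᵥ Pi.single i 1‖ := norm_le_pi_norm _ i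
      _ ≤ ‖M‖ * ‖(Pi.single i 1 : Cn n)‖ := Matrix.linfty_opNorm_mulVec _ _
      _ = ‖M‖ := by rw [Pi.norm_single, norm_one, mul_one]
  calc ‖M.trace‖ ≤ ∑ i, ‖M i i‖ := norm_sum_le _ _
    _ ≤ ∑ _i : Fin n, ‖M‖ := Finset.sum_le_sum fun i _ => hentry i
    _ = n * ‖M‖ := by simp

lemma abs_hermForm_le (M : Matrix (Fin n) (Fin n) ℂ) (x : Cn n) :
    |hermForm M x| ≤ n * ‖M‖ * ‖x‖ ^ 2 := by
  calc |hermForm M x| ≤ ‖star x ⬝ᵥ M *ᵥ x‖ := abs_re_le_norm _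
    _ ≤ n * (‖star x‖ * ‖M *ᵥ x‖) := norm_dotProduct_le _ _
    _ ≤ n * (‖x‖ * (‖M‖ * ‖x‖)) := by
        rw [norm_star]; gcongr; exact Matrix.linfty_opNorm_mulVec _ _
    _ = n * ‖M‖ * ‖x‖ ^ 2 := by ring

lemma hermForm_sub (M N : Matrix (Fin n) (Fin n) ℂ) (x : Cn n) :
    hermForm (M - N) x = hermForm M x - hermForm N x := by
  simp only [hermForm, Matrix.sub_mulVec, dotProduct_sub, sub_re]

lemma abs_hermForm_conj_sub_le {H M N : Matrix (Fin n) (Fin n) ℂ} (hHN : H * N = 1) (x : Cn n) :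
    |hermForm (H * M * H) x - hermForm H x| ≤ n * (‖H‖ * ‖M - N‖ * ‖H‖) * ‖x‖ ^ 2 := by
  rw [← hermForm_sub, show H * M * H - H = H * (M - N) * H by
    rw [mul_sub, hHN, sub_mul, one_mul]]
  refine (abs_hermForm_le _ _).trans ?_
  gcongr
  exact (norm_mul_le _ _).trans (by gcongr; exact norm_mul_le _ _)

lemma abs_re_trace_mul_sub_le {H M N : Matrix (Fin n) (Fin n) ℂ} (hNH : N * H = 1) :
    |(M * H).trace.re - n| ≤ n * (‖M - N‖ * ‖H‖) := by
  have htrace : (M * H).trace.re - n = ((M - N) * H).trace.re := by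
    rw [sub_mul, hNH, Matrix.trace_sub, Matrix.trace_one, Fintype.card_fin, sub_re, natCast_re]
  rw [htrace]
  refine ((abs_re_le_norm _).trans (norm_trace_le _)).trans ?_
  gcongr
  exact norm_mul_le _ _

lemma hermForm_smul (M : Matrix (Fin n) (Fin n) ℂ) (c : ℝ) (x : Cn n) :
    hermForm M (c • x) = c ^ 2 * hermForm M x := by
  have hre : hermForm M (c • x) = (c • c • (star x ⬝ᵥ M *ᵥ x)).re := by
    simp only [hermForm, star_smul, star_trivial, Matrix.mulVec_smul, smul_dotProduct,
      dotProduct_smul]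
  rw [hre, smul_re, smul_re, smul_eq_mul, smul_eq_mul, hermForm]
  ring

lemma continuous_hermForm :
    Continuous fun p : Matrix (Fin n) (Fin n) ℂ × Cn n => hermForm p.1 p.2 := by
  unfold hermForm
  fun_prop

lemma contDiff_hermForm {m : WithTop ℕ∞} (M : Matrix (Fin n) (Fin n) ℂ) :
    ContDiff ℝ m (hermForm M) := by
  unfold hermForm dotProduct Matrix.mulVec dotProduct
  refine reCLM.contDiff.comp (ContDiff.sum fun i _ => ContDiff.mul ?_ (ContDiff.sum fun j _ => ?_))
  · exact conjCLE.contDiff.comp (contDiff_apply ℝ ℂ i)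
  · exact contDiff_const.mul (contDiff_apply ℝ ℂ j)

namespace AlphaForm

variable (A : AlphaForm n) {K : Set (Cn n)}

lemma matrix_posDef (z : Cn n) : (A.matrix z).PosDef := by
  have hH : (A.matrix z).IsHermitian := Matrix.ext fun j k => (A.hermitian k j z).symm
  refine .of_dotProduct_mulVec_pos hH fun x hx => ?_
  have hpos := A.strictlyPositive z (star x) (star_ne_zero.2 hx)
  have hsum : star x ⬝ᵥ A.matrix z *ᵥ x =
      ∑ j, ∑ k, A.coeff j k z * star x j * starRingEnd ℂ (star x k) := by
    simp only [dotProduct, Matrix.mulVec, Finset.mul_sum, matrix, Matrix.of_apply, Pi.star_apply,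
      RCLike.star_def, conj_conj]
    exact Finset.sum_congr rfl fun j _ => Finset.sum_congr rfl fun k _ => by ring
  exact Complex.pos_iff.2 ⟨hsum ▸ hpos, (hH.im_star_dotProduct_mulVec_self x).symm⟩

lemma contDiff_matrix : ContDiff ℝ 1 A.matrix := by
  have hcoeff : ContDiff ℝ 1 fun z j k => A.coeff j k z :=
    contDiff_pi.2 fun j => contDiff_pi.2 fun k => A.contDiff j k
  exact (LinearMap.toContinuousLinearMap
    (Matrix.ofLinearEquiv (m := Fin n) (n := Fin n) (α := ℂ) ℝ).toLinearMap).contDiff.comp hcoeff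

lemma continuous_inv_matrix : Continuous fun z => (A.matrix z)⁻¹ := by
  refine continuous_iff_continuousAt.2 fun z => ?_
  obtain ⟨U, hU⟩ := (A.matrix_posDef z).isUnit
  simp only [Matrix.nonsing_inv_eq_ringInverse]
  exact ContinuousAt.comp (hU ▸ NormedRing.inverse_continuousAt U)
    A.contDiff_matrix.continuous.continuousAt

/-- The distance from `a` to `z` in the Hermitian metric on `ℂⁿ` whose matrix is the inverse of the
coefficient matrix of `α` at `a`. -/
noncomputable def frozenDist (a z : Cn n) : ℝ := √(hermForm (A.matrix a)⁻¹ (z - a))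

lemma frozenDist_nonneg (a z : Cn n) : 0 ≤ A.frozenDist a z := Real.sqrt_nonneg _

lemma sq_frozenDist (a z : Cn n) : A.frozenDist a z ^ 2 = hermForm (A.matrix a)⁻¹ (z - a) :=
  Real.sq_sqrt (Complex.nonneg_iff.1
    ((A.matrix_posDef a).inv.posSemidef.dotProduct_mulVec_nonneg (z - a))).1

lemma contDiff_sq_frozenDist {m : WithTop ℕ∞} (a : Cn n) :
    ContDiff ℝ m fun z => A.frozenDist a z ^ 2 := by
  simp only [sq_frozenDist]
  exact (contDiff_hermForm _).comp (contDiff_id.sub contDiff_const)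

lemma exists_frozenDist_le (hK : IsCompact K) :
    ∃ Λ > 0, ∀ a ∈ K, ∀ z, A.frozenDist a z ≤ Λ * ‖z - a‖ := by
  obtain ⟨C, hC⟩ := hK.exists_bound_of_continuousOn A.continuous_inv_matrix.continuousOn
  refine ⟨√(n * |C| + 1), by positivity, fun a ha z => Real.sqrt_le_iff.2 ⟨by positivity, ?_⟩⟩
  rw [mul_pow, Real.sq_sqrt (by positivity)]
  calc hermForm (A.matrix a)⁻¹ (z - a) ≤ n * ‖(A.matrix a)⁻¹‖ * ‖z - a‖ ^ 2 :=
        (le_abs_self _).trans (abs_hermForm_le _ _)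
    _ ≤ (n * |C| + 1) * ‖z - a‖ ^ 2 := by
        gcongr
        nlinarith [(hC a ha).trans (le_abs_self C), n.cast_nonneg (α := ℝ)]

lemma exists_le_frozenDist (hK : IsCompact K) :
    ∃ l > 0, ∀ a ∈ K, ∀ z, l * ‖z - a‖ ≤ A.frozenDist a z := by
  have hcont : Continuous fun p : Cn n × Cn n => hermForm (A.matrix p.1)⁻¹ p.2 :=
    continuous_hermForm.comp ((A.continuous_inv_matrix.comp continuous_fst).prodMk continuous_snd)
  have hpos (p) (hp : p ∈ K ×ˢ sphere (0 : Cn n) 1) : 0 < hermForm (A.matrix p.1)⁻¹ p.2 :=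
    (Complex.pos_iff.1 ((A.matrix_posDef p.1).inv.dotProduct_mulVec_pos
      (ne_of_mem_sphere hp.2 one_ne_zero))).1
  obtain ⟨c, hc, hle⟩ := (hK.prod (isCompact_sphere 0 1)).exists_forall_le' hcont.continuousOn hpos
  refine ⟨√c, Real.sqrt_pos.2 hc, fun a ha z => Real.le_sqrt_of_sq_le ?_⟩
  rcases eq_or_ne (z - a) 0 with hx | hx
  · simp [hermForm, hx]
  have hunit : ‖z - a‖⁻¹ • (z - a) ∈ sphere (0 : Cn n) 1 := by
    simp [norm_smul, norm_ne_zero_iff.2 hx]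
  calc (√c * ‖z - a‖) ^ 2 = c * ‖z - a‖ ^ 2 := by rw [mul_pow, Real.sq_sqrt hc.le]
    _ ≤ hermForm (A.matrix a)⁻¹ (‖z - a‖⁻¹ • (z - a)) * ‖z - a‖ ^ 2 := by
        gcongr; exact hle (a, _) ⟨ha, hunit⟩
    _ = hermForm (A.matrix a)⁻¹ (z - a) := by
        rw [hermForm_smul]; field_simp [norm_ne_zero_iff.2 hx]

/-- The coefficient of `F''` in the operator of `α` applied to `F (frozenDist a · ^ 2)`; it equals
`frozenDist a z ^ 2` if the coefficients of `α` are constant. -/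
noncomputable def radialSymbol (a z : Cn n) : ℝ :=
  hermForm ((A.matrix a)⁻¹ * A.matrix z * (A.matrix a)⁻¹) (z - a)

/-- The coefficient of `F'` in the operator of `α` applied to `F (frozenDist a · ^ 2)`; it equals
`n` if the coefficients of `α` are constant. -/
noncomputable def radialTrace (a z : Cn n) : ℝ := (A.matrix z * (A.matrix a)⁻¹).trace.re

lemma alphaOpR_comp_sq_frozenDist (a : Cn n) {F F' F'' : ℝ → ℝ} (hF : ∀ t, HasDerivAt F (F' t) t)
    (hF' : ∀ t, HasDerivAt F' (F'' t) t) (z : Cn n) :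
    alphaOpR A (fun x => F (A.frozenDist a x ^ 2)) z =
      F'' (A.frozenDist a z ^ 2) * A.radialSymbol a z +
        F' (A.frozenDist a z ^ 2) * A.radialTrace a z := by
  simp only [sq_frozenDist]
  exact alphaOpR_comp_hermForm A (A.matrix_posDef a).inv.isHermitian a hF hF' z

lemma exists_norm_matrix_sub_le (hK : IsCompact K) (hKc : Convex ℝ K) :
    ∃ L : ℝ≥0, ∀ a ∈ K, ∀ z ∈ K, ‖A.matrix z - A.matrix a‖ ≤ L * ‖z - a‖ := by
  obtain ⟨L, hL⟩ := A.contDiff_matrix.contDiffOn.exists_lipschitzOnWith one_ne_zero hKc hK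
  exact ⟨L, fun a ha z hz => hL.norm_sub_le hz ha⟩

lemma exists_abs_radialSymbol_sub_le (hK : IsCompact K) (hKc : Convex ℝ K) :
    ∃ κ ≥ 0, ∀ a ∈ K, ∀ z ∈ K,
      |A.radialSymbol a z - A.frozenDist a z ^ 2| ≤ κ * A.frozenDist a z ^ 3 ∧
      |A.radialTrace a z - n| ≤ κ * A.frozenDist a z := by
  obtain ⟨L, hL⟩ := A.exists_norm_matrix_sub_le hK hKc
  obtain ⟨C, hC⟩ := hK.exists_bound_of_continuousOn A.continuous_inv_matrix.continuousOn
  obtain ⟨l, hl, hlow⟩ := A.exists_le_frozenDist hK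
  refine ⟨n * L * (C ^ 2 / l ^ 3 + |C| / l), by positivity, fun a ha z hz => ?_⟩
  rw [radialSymbol, radialTrace]
  set H := (A.matrix a)⁻¹
  set M := A.matrix z
  set d := A.frozenDist a z with hd_def
  have hH : ‖H‖ ≤ |C| := (hC a ha).trans (le_abs_self C)
  have hunit : IsUnit (A.matrix a).det :=
    (Matrix.isUnit_iff_isUnit_det _).1 (A.matrix_posDef a).isUnit
  have hd : 0 ≤ d := A.frozenDist_nonneg a z
  have hdist : ‖z - a‖ ≤ d / l := (le_div_iff₀' hl).2 (hlow a ha z)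
  have hM : ‖M - A.matrix a‖ ≤ L * (d / l) := (hL a ha z hz).trans (by gcongr)
  constructor
  · calc |hermForm (H * M * H) (z - a) - d ^ 2|
        ≤ n * (‖H‖ * ‖M - A.matrix a‖ * ‖H‖) * ‖z - a‖ ^ 2 := by
          rw [hd_def, sq_frozenDist]
          exact abs_hermForm_conj_sub_le (Matrix.nonsing_inv_mul _ hunit) _
      _ ≤ n * (|C| * (L * (d / l)) * |C|) * (d / l) ^ 2 := by gcongr
      _ = n * L * (C ^ 2 / l ^ 3) * d ^ 3 := by rw [← sq_abs C]; field_simp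
      _ ≤ n * L * (C ^ 2 / l ^ 3 + |C| / l) * d ^ 3 := by
          gcongr; exact le_add_of_nonneg_right (by positivity)
  · calc |(M * H).trace.re - n| ≤ n * (‖M - A.matrix a‖ * ‖H‖) :=
          abs_re_trace_mul_sub_le (Matrix.mul_nonsing_inv _ hunit)
      _ ≤ n * (L * (d / l) * |C|) := by gcongr
      _ = n * L * (|C| / l) * d := by ring
      _ ≤ n * L * (C ^ 2 / l ^ 3 + |C| / l) * d := by
          gcongr; exact le_add_of_nonneg_left (by positivity)

end AlphaForm

end CoefficientMatrix

section RadialProfile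

lemma hasDerivAt_expNegInvGlue {y : ℝ} (hy : 0 < y) :
    HasDerivAt expNegInvGlue (expNegInvGlue y * y⁻¹ ^ 2) y := by
  have heq {x : ℝ} (hx : 0 < x) : expNegInvGlue x = Real.exp (-x⁻¹) := if_neg hx.not_ge
  have hexp : HasDerivAt (fun x : ℝ => Real.exp (-x⁻¹)) (Real.exp (-y⁻¹) * y⁻¹ ^ 2) y :=
    ((hasDerivAt_inv hy.ne').neg).exp.congr_deriv (by simp)
  rw [heq hy]
  exact hexp.congr_of_eventuallyEq (by filter_upwards [Ioi_mem_nhds hy] with x hx using heq hx)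

lemma expNegInvGlue_mul_inv_sq_le {y : ℝ} (hy : 0 < y) : expNegInvGlue y * y⁻¹ ^ 2 ≤ 2 := by
  have hy' : 0 < y⁻¹ := inv_pos.2 hy
  rw [expNegInvGlue, if_neg hy.not_ge, Real.exp_neg, inv_mul_le_iff₀ (Real.exp_pos _)]
  linarith [Real.quadratic_le_exp_of_nonneg hy'.le]

lemma expNegInvGlue_le_one (y : ℝ) : expNegInvGlue y ≤ 1 := by
  rcases le_or_gt y 0 with hy | hy
  · exact (expNegInvGlue.zero_of_nonpos hy).trans_le zero_le_one
  · rw [expNegInvGlue, if_neg hy.not_ge]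
    exact Real.exp_le_one_iff.2 (neg_nonpos.2 (inv_pos.2 hy).le)

lemma deriv_smoothTransition_of_nonpos {x : ℝ} (hx : x ≤ 0) :
    deriv Real.smoothTransition x = 0 :=
  IsLocalMin.deriv_eq_zero <| .of_forall fun y => by
    rw [Real.smoothTransition.zero_of_nonpos hx]; exact Real.smoothTransition.nonneg y

lemma deriv_smoothTransition_of_one_le {x : ℝ} (hx : 1 ≤ x) :
    deriv Real.smoothTransition x = 0 :=
  IsLocalMax.deriv_eq_zero <| .of_forall fun y => by
    rw [Real.smoothTransition.one_of_one_le hx]; exact Real.smoothTransition.le_one y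

lemma exists_deriv_smoothTransition_le : ∃ D ≥ 0, ∀ x, deriv Real.smoothTransition x ≤ D := by
  obtain ⟨D, hD⟩ := (isCompact_Icc (a := (0 : ℝ)) (b := 1)).exists_bound_of_continuousOn
    (Real.smoothTransition.contDiff (n := 1)).continuous_deriv_one.continuousOn
  refine ⟨|D|, abs_nonneg D, fun x => ?_⟩
  by_cases hx : x ∈ Set.Icc (0 : ℝ) 1
  · exact (le_abs_self _).trans ((hD x hx).trans (le_abs_self D))
  · rcases not_and_or.1 hx with h | h
    · rw [deriv_smoothTransition_of_nonpos (not_le.1 h).le]; exact abs_nonneg D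
    · rw [deriv_smoothTransition_of_one_le (not_le.1 h).le]; exact abs_nonneg D

/-- The negative derivative of the radial potential: `t⁻ⁿ`, up to a factor the derivative of the
fundamental solution in the variable `t = r²`, cut off smoothly for `r ≥ R` and for `r² ≤ s² / 2`.
The cutoff `exp (-1 / (R - r))` is much smaller near `r = R` than its own derivative, which
therefore absorbs errors of order `r`. -/
noncomputable def radialProfile (n : ℕ) (R s t : ℝ) : ℝ :=
  (t ^ n)⁻¹ * (expNegInvGlue (R - √t) * Real.smoothTransition (2 * t / s ^ 2 - 1))

namespace radialProfile

variable {n : ℕ} {R s t : ℝ}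

lemma eq_zero_of_le (hs : 0 < s) (ht : t ≤ s ^ 2 / 2) : radialProfile n R s t = 0 := by
  have harg : 2 * t / s ^ 2 - 1 ≤ 0 := by
    rw [sub_nonpos, div_le_one (by positivity)]; linarith
  rw [radialProfile, Real.smoothTransition.zero_of_nonpos harg, mul_zero, mul_zero]

lemma eq_zero_of_sq_le (ht : R ^ 2 ≤ t) : radialProfile n R s t = 0 := by
  have harg : R - √t ≤ 0 := sub_nonpos.2 (Real.le_sqrt_of_sq_le ht)
  rw [radialProfile, expNegInvGlue.zero_of_nonpos harg, zero_mul, mul_zero]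

lemma nonneg (hs : 0 < s) (t : ℝ) : 0 ≤ radialProfile n R s t := by
  rcases le_total t (s ^ 2 / 2) with ht | ht
  · rw [eq_zero_of_le hs ht]
  · have ht0 : 0 ≤ t := (by positivity : 0 ≤ s ^ 2 / 2).trans ht
    exact mul_nonneg (by positivity)
      (mul_nonneg (expNegInvGlue.nonneg _) (Real.smoothTransition.nonneg _))

lemma contDiff (hs : 0 < s) : ContDiff ℝ (⊤ : ℕ∞) (radialProfile n R s) := by
  refine contDiff_iff_contDiffAt.2 fun t => ?_
  rcases lt_or_ge t (s ^ 2 / 2) with ht | ht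
  · refine contDiffAt_const (c := (0 : ℝ)).congr_of_eventuallyEq ?_
    filter_upwards [Iio_mem_nhds ht] with x hx using eq_zero_of_le hs (le_of_lt hx)
  · have ht0 : 0 < t := lt_of_lt_of_le (by positivity) ht
    refine ContDiffAt.mul (ContDiffAt.inv (by fun_prop) (by positivity)) (ContDiffAt.mul ?_ ?_)
    · exact expNegInvGlue.contDiff.contDiffAt.comp t
        (contDiffAt_const.sub (Real.contDiffAt_sqrt ht0.ne'))
    · exact Real.smoothTransition.contDiff.contDiffAt.comp t (by fun_prop)

lemma deriv_eq_zero (hs : 0 < s) (ht : radialProfile n R s t = 0) :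
    deriv (radialProfile n R s) t = 0 :=
  IsLocalMin.deriv_eq_zero <| .of_forall fun x => ht.trans_le (nonneg hs x)

lemma hasDerivAt {r : ℝ} (hr : 0 < r) (hrR : r < R) :
    HasDerivAt (radialProfile n R s)
      (((r ^ 2) ^ n)⁻¹ * expNegInvGlue (R - r) *
        (deriv Real.smoothTransition (2 * r ^ 2 / s ^ 2 - 1) * (2 / s ^ 2)) -
      radialProfile n R s (r ^ 2) * ((R - r)⁻¹ ^ 2 / (2 * r) + n / r ^ 2)) (r ^ 2) := by
  have hsqrt : √(r ^ 2) = r := Real.sqrt_sq hr.le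
  have hglue : HasDerivAt (fun t => expNegInvGlue (R - √t))
      (-(expNegInvGlue (R - r) * (R - r)⁻¹ ^ 2 / (2 * r))) (r ^ 2) := by
    have hsub := (Real.hasDerivAt_sqrt (pow_ne_zero 2 hr.ne')).const_sub R
    rw [hsqrt] at hsub
    have hglue' : HasDerivAt expNegInvGlue (expNegInvGlue (R - r) * (R - r)⁻¹ ^ 2)
        (R - √(r ^ 2)) := by
      rw [hsqrt]; exact hasDerivAt_expNegInvGlue (sub_pos.2 hrR)
    have hcomp := hglue'.comp (r ^ 2) hsub
    exact hcomp.congr_deriv (by ring)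
  have htrans : HasDerivAt (fun t => Real.smoothTransition (2 * t / s ^ 2 - 1))
      (deriv Real.smoothTransition (2 * r ^ 2 / s ^ 2 - 1) * (2 / s ^ 2)) (r ^ 2) := by
    have haff : HasDerivAt (fun t : ℝ => 2 * t / s ^ 2 - 1) (2 / s ^ 2) (r ^ 2) := by
      simpa using (((hasDerivAt_id (r ^ 2)).const_mul 2).div_const (s ^ 2)).sub_const 1
    exact (((Real.smoothTransition.contDiff (n := 1)).differentiable one_ne_zero _).hasDerivAt).comp
      _ haff
  have hpow : HasDerivAt (fun t : ℝ => (t ^ n)⁻¹) (-(((r ^ 2) ^ n)⁻¹ * (n / r ^ 2))) (r ^ 2) := by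
    refine ((hasDerivAt_pow n (r ^ 2)).inv (by positivity)).congr_deriv ?_
    rcases n with _ | n
    · simp
    · simp only [Nat.add_sub_cancel, Nat.cast_add, Nat.cast_one]; field_simp; ring
  refine (hpow.mul (hglue.mul htrans)).congr_deriv ?_
  simp only [radialProfile, hsqrt, Pi.mul_apply]
  ring

end radialProfile

/-- The primitive of `-radialProfile n R s` that vanishes for `t ≥ R²`. -/
noncomputable def radialPotential (n : ℕ) (R s t : ℝ) : ℝ := ∫ x in t..R ^ 2, radialProfile n R s x

namespace radialPotential

variable {n : ℕ} {R s t : ℝ}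

lemma hasDerivAt (hs : 0 < s) (t : ℝ) :
    HasDerivAt (radialPotential n R s) (-radialProfile n R s t) t := by
  have hc : Continuous (radialProfile n R s) := (radialProfile.contDiff hs).continuous
  exact intervalIntegral.integral_hasDerivAt_left (hc.intervalIntegrable _ _)
    (hc.stronglyMeasurableAtFilter _ _) hc.continuousAt

lemma contDiff (hs : 0 < s) : ContDiff ℝ (⊤ : ℕ∞) (radialPotential n R s) := by
  refine contDiff_infty_iff_deriv.2 ⟨fun t => (hasDerivAt hs t).differentiableAt, ?_⟩
  rw [show deriv (radialPotential n R s) = fun t => -radialProfile n R s t from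
    funext fun t => (hasDerivAt hs t).deriv]
  exact (radialProfile.contDiff hs).neg

lemma eq_zero_of_sq_le (ht : R ^ 2 ≤ t) : radialPotential n R s t = 0 :=
  intervalIntegral.integral_zero_ae <| .of_forall fun _ hx => by
    rw [Set.uIoc_of_ge ht] at hx
    exact radialProfile.eq_zero_of_sq_le hx.1.le

lemma nonneg (hs : 0 < s) (t : ℝ) : 0 ≤ radialPotential n R s t := by
  rcases le_total t (R ^ 2) with ht | ht
  · exact intervalIntegral.integral_nonneg ht fun x _ => radialProfile.nonneg hs x
  · rw [eq_zero_of_sq_le ht]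

end radialPotential

/-- The value `F'' S + F' T` at `t` for `F = radialPotential n R s`; with `S` and `T` the radial
symbol and trace at a point, it is the value of the operator on the radial function. -/
noncomputable def radialOp (n : ℕ) (R s t S T : ℝ) : ℝ :=
  -deriv (radialProfile n R s) t * S + -radialProfile n R s t * T

/-- The radial symbol `S` and the radial trace `T` at distance `r < R` differ by relative errors
of order `κ r` from the values `r ^ 2` and `n` they take for constant coefficients, and `R` is
small enough for the cutoff of `radialProfile` to absorb these errors. -/
structure IsNearlyConstant (n : ℕ) (κ R r S T : ℝ) : Prop where
  nonneg : 0 ≤ κ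
  le_one : R ≤ 1
  mul_le_one : 8 * (n + 1) * κ * R ≤ 1
  pos : 0 < r
  lt : r < R
  abs_symbol_sub_le : |S - r ^ 2| ≤ κ * r ^ 3
  abs_trace_sub_le : |T - n| ≤ κ * r

namespace IsNearlyConstant

variable {n : ℕ} {κ R r S T : ℝ}

lemma abs_div_sq_mul_sub_le (h : IsNearlyConstant n κ R r S T) :
    |n / r ^ 2 * S - T| ≤ (n + 1) * κ * r := by
  have hr := h.pos
  have hS : |n / r ^ 2 * (S - r ^ 2)| ≤ n * κ * r := by
    rw [abs_mul, abs_of_nonneg (by positivity)]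
    calc n / r ^ 2 * |S - r ^ 2| ≤ n / r ^ 2 * (κ * r ^ 3) := by
          gcongr; exact h.abs_symbol_sub_le
      _ = n * κ * r := by field_simp
  calc |n / r ^ 2 * S - T| = |n / r ^ 2 * (S - r ^ 2) - (T - n)| := by congr 1; field_simp; ring
    _ ≤ |n / r ^ 2 * (S - r ^ 2)| + |T - n| := abs_sub _ _
    _ ≤ (n + 1) * κ * r := by linarith [h.abs_trace_sub_le]

lemma symbol_mem_Icc (h : IsNearlyConstant n κ R r S T) :
    S ∈ Set.Icc (r ^ 2 / 2) (3 / 2 * r ^ 2) := by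
  have hκR : κ * R ≤ 1 / 2 := by
    nlinarith [mul_nonneg h.nonneg (h.pos.trans h.lt).le, h.mul_le_one]
  have hκr : κ * r ^ 3 ≤ r ^ 2 / 2 := by
    calc κ * r ^ 3 = κ * r * r ^ 2 := by ring
      _ ≤ κ * R * r ^ 2 := by gcongr; exacts [h.nonneg, h.lt.le]
      _ ≤ 1 / 2 * r ^ 2 := by gcongr
      _ = r ^ 2 / 2 := by ring
  constructor <;> linarith [abs_le.1 h.abs_symbol_sub_le]

lemma symbol_nonneg (h : IsNearlyConstant n κ R r S T) : 0 ≤ S :=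
  le_trans (by positivity) h.symbol_mem_Icc.1

lemma bracket_mem_Icc (h : IsNearlyConstant n κ R r S T) :
    (R - r)⁻¹ ^ 2 / (2 * r) * S + (n / r ^ 2 * S - T) ∈
      Set.Icc ((R - r)⁻¹ ^ 2 * r / 8) ((R - r)⁻¹ ^ 2 * r) := by
  have hr := h.pos
  have hR : 0 < R := hr.trans h.lt
  have hsub : 0 < R - r := sub_pos.2 h.lt
  obtain ⟨hS₁, hS₂⟩ := h.symbol_mem_Icc
  obtain ⟨he₁, he₂⟩ := abs_le.1 h.abs_div_sq_mul_sub_le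
  have hinv : 1 ≤ (R - r)⁻¹ := (one_le_inv₀ hsub).2 (by linarith [h.le_one])
  have hκ : 8 * (n + 1) * κ ≤ (R - r)⁻¹ ^ 2 := by
    calc 8 * (n + 1) * κ ≤ R⁻¹ := by rw [← one_div, le_div_iff₀ hR]; exact h.mul_le_one
      _ ≤ (R - r)⁻¹ := inv_anti₀ hsub (by linarith)
      _ ≤ (R - r)⁻¹ ^ 2 := le_self_pow₀ hinv two_ne_zero
  have herr := mul_le_mul_of_nonneg_right hκ hr.le
  have hlower : (R - r)⁻¹ ^ 2 * r / 4 ≤ (R - r)⁻¹ ^ 2 / (2 * r) * S := by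
    calc (R - r)⁻¹ ^ 2 * r / 4 = (R - r)⁻¹ ^ 2 / (2 * r) * (r ^ 2 / 2) := by field_simp; norm_num
      _ ≤ _ := by gcongr
  have hupper : (R - r)⁻¹ ^ 2 / (2 * r) * S ≤ 3 / 4 * ((R - r)⁻¹ ^ 2 * r) := by
    calc _ ≤ (R - r)⁻¹ ^ 2 / (2 * r) * (3 / 2 * r ^ 2) := by gcongr
      _ = _ := by field_simp; norm_num
  constructor <;> linarith

end IsNearlyConstant

namespace radialOp

variable {n : ℕ} {κ R r s t S T : ℝ}

lemma eq_zero (hs : 0 < s) (ht : radialProfile n R s t = 0) : radialOp n R s t S T = 0 := by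
  rw [radialOp, radialProfile.deriv_eq_zero hs ht, ht]; ring

lemma eq_bracket_sub (hr : 0 < r) (hrR : r < R) :
    radialOp n R s (r ^ 2) S T =
      radialProfile n R s (r ^ 2) * ((R - r)⁻¹ ^ 2 / (2 * r) * S + (n / r ^ 2 * S - T)) -
      ((r ^ 2) ^ n)⁻¹ * expNegInvGlue (R - r) *
        (deriv Real.smoothTransition (2 * r ^ 2 / s ^ 2 - 1) * (2 / s ^ 2)) * S := by
  rw [radialOp, (radialProfile.hasDerivAt hr hrR).deriv]; ring

lemma le_two_mul (hs : 0 < s) (h : IsNearlyConstant n κ R r S T) :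
    radialOp n R s (r ^ 2) S T ≤ 2 * (r * ((r ^ 2) ^ n)⁻¹) := by
  have hr := h.pos
  have hS := h.symbol_nonneg
  have hP' : 0 ≤ deriv Real.smoothTransition (2 * r ^ 2 / s ^ 2 - 1) :=
    Real.smoothTransition.monotone.deriv_nonneg
  have hG := expNegInvGlue.nonneg (R - r)
  have hprofile : radialProfile n R s (r ^ 2) ≤ ((r ^ 2) ^ n)⁻¹ * expNegInvGlue (R - r) := by
    rw [radialProfile, Real.sqrt_sq hr.le]
    gcongr
    exact mul_le_of_le_one_right hG (Real.smoothTransition.le_one _)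
  rw [eq_bracket_sub hr h.lt]
  calc _ ≤ radialProfile n R s (r ^ 2) * ((R - r)⁻¹ ^ 2 / (2 * r) * S + (n / r ^ 2 * S - T)) :=
        sub_le_self _ (by positivity)
    _ ≤ radialProfile n R s (r ^ 2) * ((R - r)⁻¹ ^ 2 * r) :=
        mul_le_mul_of_nonneg_left h.bracket_mem_Icc.2 (radialProfile.nonneg hs _)
    _ ≤ ((r ^ 2) ^ n)⁻¹ * expNegInvGlue (R - r) * ((R - r)⁻¹ ^ 2 * r) := by gcongr
    _ = expNegInvGlue (R - r) * (R - r)⁻¹ ^ 2 * (r * ((r ^ 2) ^ n)⁻¹) := by ring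
    _ ≤ 2 * (r * ((r ^ 2) ^ n)⁻¹) := by
        gcongr; exact expNegInvGlue_mul_inv_sq_le (sub_pos.2 h.lt)

lemma bracket_le (hs : 0 < s) (h : IsNearlyConstant n κ R r S T) (hsr : s ^ 2 ≤ r ^ 2) :
    ((r ^ 2) ^ n)⁻¹ * expNegInvGlue (R - r) * ((R - r)⁻¹ ^ 2 * r / 8) ≤
      radialOp n R s (r ^ 2) S T := by
  have hG := expNegInvGlue.nonneg (R - r)
  have harg : 1 ≤ 2 * r ^ 2 / s ^ 2 - 1 := by
    rw [le_sub_iff_add_le, le_div_iff₀ (by positivity)]; linarith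
  rw [eq_bracket_sub h.pos h.lt, deriv_smoothTransition_of_one_le harg, radialProfile,
    Real.smoothTransition.one_of_one_le harg, Real.sqrt_sq h.pos.le]
  simp only [mul_one, zero_mul, mul_zero, sub_zero]
  gcongr
  exact h.bracket_mem_Icc.1

lemma nonneg_of_sq_le (hs : 0 < s) (h : IsNearlyConstant n κ R r S T) (hsr : s ^ 2 ≤ r ^ 2) :
    0 ≤ radialOp n R s (r ^ 2) S T := by
  have hr := h.pos
  have hG := expNegInvGlue.nonneg (R - r)
  exact le_trans (by positivity) (bracket_le hs h hsr)

lemma le_of_sq_le (hn : n ≠ 0) (hs : 0 < s) (h : IsNearlyConstant n κ R r S T)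
    (hrR : r ≤ R / 2) (hsr : s ^ 2 ≤ r ^ 2) :
    expNegInvGlue (R / 2) / 8 ≤ radialOp n R s (r ^ 2) S T := by
  have hr := h.pos
  have hinv : 1 ≤ (R - r)⁻¹ := (one_le_inv₀ (sub_pos.2 h.lt)).2 (by linarith [h.le_one])
  have hpow : 1 ≤ ((r ^ 2) ^ n)⁻¹ * r := by
    rw [inv_mul_eq_div, one_le_div (by positivity), ← pow_mul]
    exact pow_le_of_le_one hr.le (by linarith [h.lt, h.le_one]) (by simp [hn])
  calc expNegInvGlue (R / 2) / 8 = expNegInvGlue (R / 2) * (1 * (1 ^ 2 / 8)) := by ring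
    _ ≤ expNegInvGlue (R - r) * (((r ^ 2) ^ n)⁻¹ * r * ((R - r)⁻¹ ^ 2 / 8)) := by
        gcongr
        · exact expNegInvGlue.nonneg _
        · exact expNegInvGlue.monotone (by linarith)
    _ = ((r ^ 2) ^ n)⁻¹ * expNegInvGlue (R - r) * ((R - r)⁻¹ ^ 2 * r / 8) := by ring
    _ ≤ _ := bracket_le hs h hsr

lemma deriv_smoothTransition_mul_le {D : ℝ} (hD : 0 ≤ D)
    (hD' : ∀ x, deriv Real.smoothTransition x ≤ D) (hs : 0 < s)
    (h : IsNearlyConstant n κ R r S T) :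
    deriv Real.smoothTransition (2 * r ^ 2 / s ^ 2 - 1) * (((r ^ 2) ^ n)⁻¹ * S) ≤
      3 / 2 * D * 2 ^ n / s ^ (2 * n) * s ^ 2 := by
  have hr := h.pos
  have hS := h.symbol_nonneg
  have hrhs : 0 ≤ 3 / 2 * D * 2 ^ n / s ^ (2 * n) * s ^ 2 := by positivity
  rcases le_total (r ^ 2) (s ^ 2 / 2) with hrs | hrs
  · rwa [deriv_smoothTransition_of_nonpos, zero_mul]
    rw [sub_nonpos, div_le_one (by positivity)]; linarith
  rcases le_total (s ^ 2) (r ^ 2) with hsr | hsr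
  · rwa [deriv_smoothTransition_of_one_le, zero_mul]
    rw [le_sub_iff_add_le, le_div_iff₀ (by positivity)]; linarith
  calc _ ≤ D * (((s ^ 2 / 2) ^ n)⁻¹ * (3 / 2 * s ^ 2)) := by
        gcongr
        · exact hD' _
        · linarith [h.symbol_mem_Icc.2]
    _ = _ := by rw [div_pow, pow_mul]; field_simp

lemma neg_le {D : ℝ} (hD : 0 ≤ D) (hD' : ∀ x, deriv Real.smoothTransition x ≤ D) (hs : 0 < s)
    (h : IsNearlyConstant n κ R r S T) :
    -(3 * D * 2 ^ n / s ^ (2 * n)) ≤ radialOp n R s (r ^ 2) S T := by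
  have hr := h.pos
  have hS := h.symbol_nonneg
  have hP' : 0 ≤ deriv Real.smoothTransition (2 * r ^ 2 / s ^ 2 - 1) :=
    Real.smoothTransition.monotone.deriv_nonneg
  have hmain := mul_nonneg (radialProfile.nonneg (n := n) (R := R) hs (r ^ 2))
    (le_trans (by positivity) h.bracket_mem_Icc.1)
  have hcut : ((r ^ 2) ^ n)⁻¹ * expNegInvGlue (R - r) *
      (deriv Real.smoothTransition (2 * r ^ 2 / s ^ 2 - 1) * (2 / s ^ 2)) * S ≤
      3 * D * 2 ^ n / s ^ (2 * n) := by
    calc _ = expNegInvGlue (R - r) * (deriv Real.smoothTransition (2 * r ^ 2 / s ^ 2 - 1) *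
          (((r ^ 2) ^ n)⁻¹ * S)) * (2 / s ^ 2) := by ring
      _ ≤ 1 * (3 / 2 * D * 2 ^ n / s ^ (2 * n) * s ^ 2) * (2 / s ^ 2) := by
          have hG := expNegInvGlue_le_one (R - r)
          have hterm := deriv_smoothTransition_mul_le hD hD' hs h
          exact mul_le_mul_of_nonneg_right (mul_le_mul hG hterm (by positivity) zero_le_one)
            (by positivity)
      _ = _ := by field_simp
  rw [eq_bracket_sub hr h.lt]
  linarith

end radialOp

end RadialProfile

section SubmeanKernel

variable {n : ℕ} {κ l Λ R r s : ℝ} {a : Cn n}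

/-- The test function `F (frozenDist a · ^ 2)` built on the radial potential `F`. -/
noncomputable def AlphaForm.submeanKernel (A : AlphaForm n) (R s : ℝ) (a z : Cn n) : ℝ :=
  radialPotential n R s (A.frozenDist a z ^ 2)

/-- The frozen distance from `a` is comparable to the distance of `ℂⁿ`, the ball it defines with
radius `R` lies in `closedBall a r`, and the radial symbol and trace are nearly constant there. -/
structure IsAdmissibleCenter (A : AlphaForm n) (κ l Λ R r : ℝ) (a : Cn n) : Prop where
  le_frozenDist : ∀ z, l * ‖z - a‖ ≤ A.frozenDist a z
  frozenDist_le : ∀ z, A.frozenDist a z ≤ Λ * ‖z - a‖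
  le_mul : R ≤ l * r
  isNearlyConstant : ∀ z, 0 < A.frozenDist a z → A.frozenDist a z < R →
    IsNearlyConstant n κ R (A.frozenDist a z) (A.radialSymbol a z) (A.radialTrace a z)

/-- A test function `ω` supported in `closedBall a r` whose image under the operator of `α` is
negative only in `closedBall a s`, has there the size `s ^ (-2n)` of an averaging kernel, has
positive part of mass at least `m`, and is dominated by an integrable singularity at `a`. -/
structure IsSubmeanKernel (A : AlphaForm n) (C K m r s : ℝ) (a : Cn n) (ω : Cn n → ℝ) : Prop where
  contDiff : ContDiff ℝ (⊤ : ℕ∞) ω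
  tsupport_subset : tsupport ω ⊆ closedBall a r
  nonneg : ∀ z, 0 ≤ ω z
  alphaOpR_le : ∀ z, alphaOpR A ω z ≤ C * (‖z - a‖ ^ (2 * n - 1))⁻¹
  neg_le_alphaOpR : ∀ z, -(K / s ^ (2 * n)) ≤ alphaOpR A ω z
  alphaOpR_nonneg : ∀ z ∉ closedBall a s, 0 ≤ alphaOpR A ω z
  le_integral : m ≤ ∫ z, max (alphaOpR A ω z) 0

namespace AlphaForm

variable (A : AlphaForm n)

lemma exists_isAdmissibleCenter (z₀ : Cn n) (hr : 0 < r) :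
    ∃ κ R l Λ : ℝ, 0 < R ∧ 0 < l ∧ 0 < Λ ∧
      ∀ a ∈ closedBall z₀ r, IsAdmissibleCenter A κ l Λ R r a := by
  have hB := isCompact_closedBall z₀ (2 * r)
  obtain ⟨l, hl, hlow⟩ := A.exists_le_frozenDist hB
  obtain ⟨Λ, hΛ, hup⟩ := A.exists_frozenDist_le hB
  obtain ⟨κ, hκ, hnear⟩ := A.exists_abs_radialSymbol_sub_le hB (convex_closedBall z₀ (2 * r))
  set R := min (l * r) (min 1 (8 * (n + 1) * (κ + 1))⁻¹)
  have hRl : R ≤ l * r := min_le_left _ _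
  have hRκ : R ≤ (8 * (n + 1) * (κ + 1))⁻¹ := (min_le_right _ _).trans (min_le_right _ _)
  have hκR : 8 * (n + 1) * κ * R ≤ 1 := by
    calc 8 * (n + 1) * κ * R ≤ 8 * (n + 1) * (κ + 1) * (8 * (n + 1) * (κ + 1))⁻¹ := by
          gcongr; linarith
      _ = 1 := mul_inv_cancel₀ (by positivity)
  have hsub {a : Cn n} (ha : a ∈ closedBall z₀ r) : closedBall a r ⊆ closedBall z₀ (2 * r) :=
    closedBall_subset_closedBall' (by linarith [mem_closedBall.1 ha])
  refine ⟨κ, R, l, Λ, by positivity, hl, hΛ, fun a ha => ?_⟩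
  have ha' := hsub ha (mem_closedBall_self hr.le)
  refine ⟨hlow a ha', hup a ha', hRl, fun z hd hdR => ?_⟩
  have hz : z ∈ closedBall a r := by
    rw [mem_closedBall, dist_eq_norm]
    exact le_of_mul_le_mul_left ((hlow a ha' z).trans (hdR.le.trans hRl)) hl
  obtain ⟨hS, hT⟩ := hnear a ha' z (hsub ha hz)
  exact ⟨hκ, (min_le_right _ _).trans (min_le_left _ _), hκR, hd, hdR, hS, hT⟩

lemma contDiff_submeanKernel (hs : 0 < s) : ContDiff ℝ (⊤ : ℕ∞) (A.submeanKernel R s a) :=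
  (radialPotential.contDiff hs).comp (A.contDiff_sq_frozenDist a)

lemma alphaOpR_submeanKernel (hs : 0 < s) (a z : Cn n) :
    alphaOpR A (A.submeanKernel R s a) z =
      radialOp n R s (A.frozenDist a z ^ 2) (A.radialSymbol a z) (A.radialTrace a z) := by
  have hdiff := (radialProfile.contDiff (n := n) (R := R) hs).differentiable (by simp)
  exact A.alphaOpR_comp_sq_frozenDist a (radialPotential.hasDerivAt hs)
    (fun t => (hdiff t).hasDerivAt.neg) z

end AlphaForm

namespace IsAdmissibleCenter

variable {A : AlphaForm n}

lemma tsupport_submeanKernel_subset (h : IsAdmissibleCenter A κ l Λ R r a) (hl : 0 < l)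
    (hR : 0 < R) : tsupport (A.submeanKernel R s a) ⊆ closedBall a r := by
  refine closure_minimal (fun z hz => ?_) isClosed_closedBall
  have hd : A.frozenDist a z < R := by
    by_contra! hRd
    exact hz (radialPotential.eq_zero_of_sq_le (by gcongr))
  rw [mem_closedBall, dist_eq_norm]
  exact le_of_mul_le_mul_left ((h.le_frozenDist z).trans (hd.le.trans h.le_mul)) hl

lemma radialOp_eq_zero_or (h : IsAdmissibleCenter A κ l Λ R r a) (hs : 0 < s) (hR : 0 < R)
    (z : Cn n) :
    radialOp n R s (A.frozenDist a z ^ 2) (A.radialSymbol a z) (A.radialTrace a z) = 0 ∨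
      IsNearlyConstant n κ R (A.frozenDist a z) (A.radialSymbol a z) (A.radialTrace a z) := by
  rcases (A.frozenDist_nonneg a z).eq_or_lt with hd | hd
  · refine .inl (radialOp.eq_zero hs (radialProfile.eq_zero_of_le hs ?_))
    rw [← hd, zero_pow two_ne_zero]; positivity
  · rcases lt_or_ge (A.frozenDist a z) R with hdR | hdR
    · exact .inr (h.isNearlyConstant z hd hdR)
    · exact .inl (radialOp.eq_zero hs (radialProfile.eq_zero_of_sq_le (by gcongr)))

lemma radialOp_le (h : IsAdmissibleCenter A κ l Λ R r a) (hn : n ≠ 0) (hs : 0 < s) (hR : 0 < R)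
    (hl : 0 < l) (z : Cn n) :
    radialOp n R s (A.frozenDist a z ^ 2) (A.radialSymbol a z) (A.radialTrace a z) ≤
      2 * (l ^ (2 * n - 1))⁻¹ * (‖z - a‖ ^ (2 * n - 1))⁻¹ := by
  rcases h.radialOp_eq_zero_or hs hR z with hz | hz
  · rw [hz]; positivity
  · have hd := hz.pos
    have hza : 0 < ‖z - a‖ := (norm_nonneg _).lt_of_ne fun h0 => by
      have := hd.trans_le (h.frozenDist_le z)
      rw [← h0, mul_zero] at this
      exact this.false
    have hpow : (A.frozenDist a z ^ 2) ^ n =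
        A.frozenDist a z ^ (2 * n - 1) * A.frozenDist a z := by
      rw [← pow_succ, ← pow_mul]; congr 1; omega
    calc _ ≤ 2 * (A.frozenDist a z * ((A.frozenDist a z ^ 2) ^ n)⁻¹) := radialOp.le_two_mul hs hz
      _ = 2 * (A.frozenDist a z ^ (2 * n - 1))⁻¹ := by rw [hpow]; field_simp
      _ ≤ 2 * ((l * ‖z - a‖) ^ (2 * n - 1))⁻¹ := by gcongr; exact h.le_frozenDist z
      _ = _ := by rw [mul_pow, mul_inv, mul_assoc]

/-- The mass bound comes from a ball of radius `R / (16 Λ)` inside the shell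
`R / (4 Λ) < ‖z - a‖ < R / (2 Λ)`, where the profile is not cut off near `a`. -/
lemma le_integral_submeanKernel (h : IsAdmissibleCenter A κ l Λ R r a) (hn : n ≠ 0) (hl : 0 < l)
    (hR : 0 < R) (hΛ : 0 < Λ) (hs : 0 < s) (hsR : s ≤ R / (4 * Λ)) :
    expNegInvGlue (R / 2) / 8 * volume.real (ball (0 : Cn n) (R / (16 * Λ))) ≤
      ∫ z, max (alphaOpR A (A.submeanKernel R (l * s) a) z) 0 := by
  have : Nonempty (Fin n) := ⟨⟨0, Nat.pos_of_ne_zero hn⟩⟩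
  have hls : 0 < l * s := mul_pos hl hs
  obtain ⟨p, hp⟩ := exists_norm_eq (Cn n) (c := 3 / 8 * (R / Λ)) (by positivity)
  have hball : volume.real (ball (a + p) (R / (16 * Λ))) =
      volume.real (ball (0 : Cn n) (R / (16 * Λ))) := by
    simp only [Measure.real, Measure.addHaar_ball_center]
  have hω := A.contDiff_submeanKernel (R := R) (a := a) hls
  have hint : Integrable fun z => max (alphaOpR A (A.submeanKernel R (l * s) a) z) 0 := by
    have hc : HasCompactSupport (A.submeanKernel R (l * s) a) :=
      (isCompact_closedBall a r).of_isClosed_subset (isClosed_tsupport _)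
        (h.tsupport_submeanKernel_subset hl hR)
    exact ((A.continuous_alphaOpR (hω.of_le (by norm_cast))).integrable_of_hasCompactSupport
      (A.hasCompactSupport_alphaOpR hc)).pos_part
  rw [← hball]
  refine (setIntegral_ge_of_const_le_real measurableSet_ball measure_ball_lt_top.ne
    (fun z hz => ?_) hint.integrableOn).trans
    (setIntegral_le_integral hint (.of_forall fun z => le_max_right _ _))
  obtain ⟨hsz, hzR⟩ : s ≤ ‖z - a‖ ∧ ‖z - a‖ ≤ R / (2 * Λ) := by
    have hzp : |‖z - a‖ - ‖p‖| < R / (16 * Λ) := by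
      refine (abs_norm_sub_norm_le _ _).trans_lt ?_
      rwa [sub_sub, ← dist_eq_norm, ← mem_ball]
    rw [show R / (16 * Λ) = R / Λ / 16 by field_simp, hp, abs_lt] at hzp
    rw [show R / (2 * Λ) = R / Λ / 2 by field_simp]
    rw [show R / (4 * Λ) = R / Λ / 4 by field_simp] at hsR
    constructor <;> linarith
  have hlow : l * s ≤ A.frozenDist a z := le_trans (by gcongr) (h.le_frozenDist z)
  have hup : A.frozenDist a z ≤ R / 2 := by
    calc _ ≤ Λ * (R / (2 * Λ)) := (h.frozenDist_le z).trans (by gcongr)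
      _ = R / 2 := by field_simp
  have hd := h.isNearlyConstant z (hls.trans_le hlow) (by linarith)
  rw [A.alphaOpR_submeanKernel hls]
  exact le_max_of_le_left (radialOp.le_of_sq_le hn hls hd hup (by gcongr))

lemma isSubmeanKernel (h : IsAdmissibleCenter A κ l Λ R r a) (hn : n ≠ 0) (hl : 0 < l)
    (hR : 0 < R) (hΛ : 0 < Λ) (hs : 0 < s) (hsR : s ≤ R / (4 * Λ)) {D : ℝ} (hD : 0 ≤ D)
    (hD' : ∀ x, deriv Real.smoothTransition x ≤ D) :
    IsSubmeanKernel A (2 * (l ^ (2 * n - 1))⁻¹) (3 * D * 2 ^ n / l ^ (2 * n))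
      (expNegInvGlue (R / 2) / 8 * volume.real (ball (0 : Cn n) (R / (16 * Λ)))) r s a
      (A.submeanKernel R (l * s) a) := by
  have hls : 0 < l * s := mul_pos hl hs
  refine ⟨A.contDiff_submeanKernel hls, h.tsupport_submeanKernel_subset hl hR,
    fun z => radialPotential.nonneg hls _, fun z => ?_, fun z => ?_, fun z hz => ?_,
    h.le_integral_submeanKernel hn hl hR hΛ hs hsR⟩
  all_goals rw [A.alphaOpR_submeanKernel hls]
  · exact h.radialOp_le hn hls hR hl z
  · rw [div_div, ← mul_pow]
    rcases h.radialOp_eq_zero_or hls hR z with hz | hz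
    · rw [hz, neg_nonpos]; positivity
    · exact radialOp.neg_le hD hD' hls hz
  · rw [mem_closedBall, dist_eq_norm, not_le] at hz
    have hlow : l * s ≤ A.frozenDist a z := le_trans (by gcongr) (h.le_frozenDist z)
    rcases h.radialOp_eq_zero_or hls hR z with hz | hz
    · exact hz.ge
    · exact radialOp.nonneg_of_sq_le hls hz (by gcongr)

end IsAdmissibleCenter

lemma AlphaForm.exists_isSubmeanKernel (A : AlphaForm n) (hn : n ≠ 0) (z₀ : Cn n) (hr : 0 < r) :
    ∃ C K m s₀ : ℝ, 0 ≤ C ∧ 0 ≤ K ∧ 0 < m ∧ 0 < s₀ ∧ ∀ a ∈ closedBall z₀ r, ∀ s, 0 < s → s ≤ s₀ →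
      ∃ ω : Cn n → ℝ, IsSubmeanKernel A C K m r s a ω := by
  obtain ⟨κ, R, l, Λ, hR, hl, hΛ, hcenter⟩ := A.exists_isAdmissibleCenter z₀ hr
  obtain ⟨D, hD, hD'⟩ := exists_deriv_smoothTransition_le
  have hG : 0 < expNegInvGlue (R / 2) := expNegInvGlue.pos_of_pos (by positivity)
  have hvol : 0 < volume.real (ball (0 : Cn n) (R / (16 * Λ))) :=
    ENNReal.toReal_pos (measure_ball_pos _ _ (by positivity)).ne' measure_ball_lt_top.ne
  exact ⟨_, _, _, R / (4 * Λ), by positivity, by positivity, by positivity, by positivity,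
    fun a ha s hs hsR => ⟨_, (hcenter a ha).isSubmeanKernel hn hl hR hΛ hs hsR hD hD'⟩⟩

end SubmeanKernel

section SubmeanInequality

lemma sub_mul_add_sub_mul_max_sub_le (w h b c : ℝ) :
    (w - c) * h + (b - c) * (max h 0 - h) ≤
      max (w - c) 0 * max h 0 + ‖w - b‖ * max (-h) 0 := by
  rcases le_or_gt 0 h with hh | hh
  · rw [max_eq_left hh, max_eq_right (neg_nonpos.2 hh), sub_self, mul_zero, mul_zero, add_zero,
      add_zero]
    exact mul_le_mul_of_nonneg_right (le_max_left _ _) hh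
  · rw [max_eq_right hh.le, max_eq_left (neg_nonneg.2 hh.le), mul_zero, zero_add, zero_sub]
    calc (w - c) * h + (b - c) * -h = (w - b) * h := by ring
      _ ≤ |(w - b) * h| := le_abs_self _
      _ = ‖w - b‖ * -h := by rw [abs_mul, abs_of_neg hh, Real.norm_eq_abs]

lemma mul_sub_le_integral_posPart_mul_add {X : Type*} [MeasurableSpace X] {μ : Measure X}
    [IsFiniteMeasure μ] {w h : X → ℝ} {B : Set X} {b c m κ M : ℝ} (hw : Integrable w μ)
    (hh : AEStronglyMeasurable h μ) (hM : ∀ x, |h x| ≤ M) (hh₀ : ∫ x, h x ∂μ = 0)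
    (hwh : 0 ≤ ∫ x, w x * h x ∂μ) (hm : m ≤ ∫ x, max (h x) 0 ∂μ) (hκ : ∀ x, -κ ≤ h x)
    (hκ₀ : 0 ≤ κ) (hB : MeasurableSet B) (hhB : ∀ x ∉ B, 0 ≤ h x) (hcb : c ≤ b) :
    m * (b - c) ≤
      (∫ x, max (w x - c) 0 * max (h x) 0 ∂μ) + κ * ∫ x in B, ‖w x - b‖ ∂μ := by
  have hnegPart (x : X) : ‖w x - b‖ * max (-h x) 0 ≤ κ * B.indicator (fun x => ‖w x - b‖) x := by
    by_cases hx : x ∈ B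
    · rw [Set.indicator_of_mem hx, mul_comm]
      gcongr
      exact max_le (neg_le.1 (hκ x)) hκ₀
    · rw [Set.indicator_of_notMem hx, max_eq_right (neg_nonpos.2 (hhB x hx)), mul_zero, mul_zero]
  have hpointwise (x : X) : (w x - c) * h x + (b - c) * (max (h x) 0 - h x) ≤
      max (w x - c) 0 * max (h x) 0 + κ * B.indicator (fun x => ‖w x - b‖) x :=
    (sub_mul_add_sub_mul_max_sub_le _ _ _ _).trans (add_le_add_right (hnegPart x) _)
  have hbdd (x : X) : ‖max (h x) 0‖ ≤ M := by
    rw [Real.norm_of_nonneg (le_max_right _ _)]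
    exact max_le ((le_abs_self _).trans (hM x)) ((abs_nonneg _).trans (hM x))
  have hhi : Integrable h μ := .of_bound hh M (.of_forall hM)
  have hwc : Integrable (fun x => w x - c) μ := hw.sub (integrable_const c)
  have hwh' : Integrable (fun x => w x * h x) μ := hw.mul_bdd hh (.of_forall hM)
  have hwch : Integrable (fun x => (w x - c) * h x) μ := hwc.mul_bdd hh (.of_forall hM)
  have hneg : Integrable (fun x => (b - c) * (max (h x) 0 - h x)) μ :=
    (hhi.pos_part.sub hhi).const_mul _
  have hpos : Integrable (fun x => max (w x - c) 0 * max (h x) 0) μ :=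
    hwc.pos_part.mul_bdd hhi.pos_part.aestronglyMeasurable (.of_forall hbdd)
  have hind : Integrable (fun x => κ * B.indicator (fun x => ‖w x - b‖) x) μ :=
    (((hw.sub (integrable_const b)).norm).indicator hB).const_mul _
  have hleft : ∫ x, (w x - c) * h x + (b - c) * (max (h x) 0 - h x) ∂μ =
      (∫ x, w x * h x ∂μ) + (b - c) * ∫ x, max (h x) 0 ∂μ := by
    rw [integral_add hwch hneg, integral_const_mul, integral_sub hhi.pos_part hhi, hh₀, sub_zero]
    simp only [sub_mul]
    rw [integral_sub hwh' (hhi.const_mul c), integral_const_mul, hh₀, mul_zero, sub_zero]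
  have hint := integral_mono (hwch.add hneg) (hpos.add hind) hpointwise
  simp only [Pi.add_apply] at hint
  rw [hleft, integral_add hpos hind, integral_const_mul, integral_indicator hB] at hint
  linarith [mul_le_mul_of_nonneg_left hm (sub_nonneg.2 hcb)]

section AddHaar

variable {E : Type*} [NormedAddCommGroup E] [NormedSpace ℝ E] [FiniteDimensional ℝ E]
  [MeasurableSpace E] [BorelSpace E] {μ : Measure E} [μ.IsAddHaarMeasure]

lemma integrableOn_inv_norm_pow {k : ℕ} (hk : k < Module.finrank ℝ E) (ρ : ℝ) :
    IntegrableOn (fun x : E => (‖x‖ ^ k)⁻¹) (ball 0 ρ) μ := by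
  have : Nontrivial E := Module.nontrivial_of_finrank_pos (R := ℝ) (Nat.zero_lt_of_lt hk)
  rw [integrableOn_fun_norm_addHaar (E := E) μ (f := fun y : ℝ => (y ^ k)⁻¹)]
  have hint : IntegrableOn (fun y : ℝ => y ^ (Module.finrank ℝ E - 1 - k)) (Set.Ioo 0 ρ) :=
    ((continuous_pow _).integrableOn_Icc (a := 0) (b := ρ)).mono_set Set.Ioo_subset_Icc_self
  refine hint.congr_fun (fun y hy => ?_) measurableSet_Ioo
  simp only [smul_eq_mul]
  rw [← div_eq_mul_inv, eq_div_iff (pow_ne_zero k hy.1.ne'), ← pow_add]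
  congr 1; omega

lemma tendsto_setIntegral_inv_norm_pow {k : ℕ} (hk : k < Module.finrank ℝ E) :
    Tendsto (fun ρ => ∫ x in ball (0 : E) ρ, (‖x‖ ^ k)⁻¹ ∂μ) (𝓝[>] 0) (𝓝 0) := by
  have hfin : Module.finrank ℝ E ≠ 0 := (Nat.zero_lt_of_lt hk).ne'
  have hball : Tendsto (fun ρ : ℝ => μ (ball (0 : E) ρ)) (𝓝[>] 0) (𝓝 0) := by
    have hpow : Tendsto (fun ρ : ℝ => ENNReal.ofReal (ρ ^ Module.finrank ℝ E) * μ (ball (0 : E) 1))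
        (𝓝 0) (𝓝 0) := by
      have hcont : Continuous fun ρ : ℝ => ENNReal.ofReal (ρ ^ Module.finrank ℝ E) :=
        ENNReal.continuous_ofReal.comp (continuous_pow _)
      simpa [hfin] using
        ENNReal.Tendsto.mul_const (hcont.tendsto 0) (.inr (measure_ball_lt_top (μ := μ)).ne)
    refine (hpow.mono_left nhdsWithin_le_nhds).congr' ?_
    filter_upwards [self_mem_nhdsWithin] with ρ hρ using (Measure.addHaar_ball_of_pos μ 0 hρ).symm
  have hball' : Tendsto (fun ρ : ℝ => μ.restrict (ball 0 1) (ball (0 : E) ρ)) (𝓝[>] 0) (𝓝 0) :=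
    tendsto_of_tendsto_of_tendsto_of_le_of_le tendsto_const_nhds hball (fun _ => zero_le)
      fun _ => Measure.restrict_apply_le _ _
  refine ((integrableOn_inv_norm_pow hk 1).tendsto_setIntegral_nhds_zero hball').congr' ?_
  filter_upwards [Ioo_mem_nhdsGT one_pos] with ρ hρ
  rw [Measure.restrict_restrict_of_subset (ball_subset_ball hρ.2.le)]

lemma setIntegral_mul_le_of_le_inv_norm_sub_pow {k : ℕ} (hk : k < Module.finrank ℝ E) {s : Set E}
    {f g : E → ℝ} {C M ρ : ℝ} {a : E} (hf : IntegrableOn f s μ) (hf₀ : ∀ x, 0 ≤ f x)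
    (hfM : ∀ᵐ x ∂μ.restrict s, f x ≤ M) (hM : 0 ≤ M) (hg₀ : ∀ x, 0 ≤ g x) (hC : 0 ≤ C)
    (hg : ∀ x, g x ≤ C * (‖x - a‖ ^ k)⁻¹) (hρ : 0 < ρ) :
    ∫ x in s, f x * g x ∂μ ≤
      C * (M * (∫ x in ball (0 : E) ρ, (‖x‖ ^ k)⁻¹ ∂μ) + (ρ ^ k)⁻¹ * ∫ x in s, f x ∂μ) := by
  set φ : E → ℝ := (ball (0 : E) ρ).indicator fun x => (‖x‖ ^ k)⁻¹ with hφ_def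
  have hφ₀ (x : E) : 0 ≤ φ x := Set.indicator_nonneg (fun _ _ => by positivity) x
  have hφ : Integrable (fun x => φ (x - a)) μ :=
    ((integrable_indicator_iff measurableSet_ball).2
      (integrableOn_inv_norm_pow hk ρ)).comp_sub_right a
  have hkernel (x : E) : (‖x - a‖ ^ k)⁻¹ ≤ φ (x - a) + (ρ ^ k)⁻¹ := by
    by_cases hx : x - a ∈ ball 0 ρ
    · rw [hφ_def, Set.indicator_of_mem hx]; exact le_add_of_nonneg_right (by positivity)
    · rw [hφ_def, Set.indicator_of_notMem hx, zero_add]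
      rw [mem_ball_zero_iff, not_lt] at hx
      gcongr
  have hpointwise : ∀ᵐ x ∂μ.restrict s,
      f x * g x ≤ C * (M * φ (x - a) + (ρ ^ k)⁻¹ * f x) := by
    filter_upwards [hfM] with x hx
    have hfx := hf₀ x
    calc f x * g x ≤ f x * (C * (φ (x - a) + (ρ ^ k)⁻¹)) := by
          gcongr; exact (hg x).trans (by gcongr; exact hkernel x)
      _ = C * (f x * φ (x - a) + (ρ ^ k)⁻¹ * f x) := by ring
      _ ≤ C * (M * φ (x - a) + (ρ ^ k)⁻¹ * f x) := by gcongr; exact hφ₀ _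
  have hφs : ∫ x in s, φ (x - a) ∂μ ≤ ∫ x in ball (0 : E) ρ, (‖x‖ ^ k)⁻¹ ∂μ := by
    calc ∫ x in s, φ (x - a) ∂μ ≤ ∫ x, φ (x - a) ∂μ :=
          setIntegral_le_integral hφ (.of_forall fun x => hφ₀ _)
      _ = _ := by rw [integral_sub_right_eq_self, integral_indicator measurableSet_ball]
  calc ∫ x in s, f x * g x ∂μ ≤ ∫ x in s, C * (M * φ (x - a) + (ρ ^ k)⁻¹ * f x) ∂μ :=
        integral_mono_of_nonneg (.of_forall fun x => mul_nonneg (hf₀ x) (hg₀ x))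
          (((hφ.integrableOn.const_mul M).add (hf.const_mul _)).const_mul C) hpointwise
    _ = C * (M * (∫ x in s, φ (x - a) ∂μ) + (ρ ^ k)⁻¹ * ∫ x in s, f x ∂μ) := by
        rw [integral_const_mul, integral_add (hφ.integrableOn.const_mul M) (hf.const_mul _),
          integral_const_mul, integral_const_mul]
    _ ≤ _ := by gcongr

lemma ae_tendsto_inv_pow_mul_setIntegral_norm_sub {F : Type*} [NormedAddCommGroup F]
    {f : E → F} {U : Set E} (hU : IsOpen U) (hf : IntegrableOn f U μ) :
    ∀ᵐ a ∂μ.restrict U, Tendsto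
      (fun s => (s ^ Module.finrank ℝ E)⁻¹ * ∫ x in closedBall a s, ‖f x - f a‖ ∂μ)
      (𝓝[>] 0) (𝓝 0) := by
  have hfU : LocallyIntegrable (U.indicator f) μ :=
    ((integrable_indicator_iff hU.measurableSet).2 hf).locallyIntegrable
  have hlebesgue := IsUnifLocDoublingMeasure.ae_tendsto_average_norm_sub μ hfU 1
  filter_upwards [ae_restrict_of_ae hlebesgue, ae_restrict_mem hU.measurableSet] with a ha haU
  have hdist : ∀ᶠ s : ℝ in 𝓝[>] 0, closedBall a s ⊆ U := by
    obtain ⟨t, ht, htU⟩ := nhds_basis_closedBall.mem_iff.1 (hU.mem_nhds haU)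
    filter_upwards [Ioo_mem_nhdsGT ht] with s hs
    exact (closedBall_subset_closedBall hs.2.le).trans htU
  have havg := (ha (l := 𝓝[>] 0) (fun _ => a) id tendsto_id
    (eventually_nhdsWithin_of_forall fun s (hs : 0 < s) => by simp [hs.le])).const_mul
      (μ.real (ball 0 1))
  rw [mul_zero] at havg
  refine havg.congr' ?_
  filter_upwards [hdist, self_mem_nhdsWithin] with s hsU (hs : 0 < s)
  have hcongr : ∫ x in closedBall a s, ‖U.indicator f x - U.indicator f a‖ ∂μ =
      ∫ x in closedBall a s, ‖f x - f a‖ ∂μ :=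
    setIntegral_congr_fun measurableSet_closedBall fun x hx => by
      simp only [Set.indicator_of_mem (hsU hx), Set.indicator_of_mem haU]
  have hunit : μ.real (ball (0 : E) 1) ≠ 0 :=
    (ENNReal.toReal_pos (measure_ball_pos μ _ one_pos).ne' measure_ball_lt_top.ne).ne'
  rw [id, setAverage_eq, hcongr, Measure.addHaar_real_closedBall μ a hs.le, smul_eq_mul]
  field_simp

end AddHaar

end SubmeanInequality

section LocalMaximumPrinciple

variable {n : ℕ} {A : AlphaForm n} {D : Set (Cn n)} {v : Cn n → ℝ}

lemma finrank_Cn (n : ℕ) : Module.finrank ℝ (Cn n) = 2 * n := by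
  simp [Cn, Module.finrank_pi_fintype, mul_comm]

/-- `v` is locally integrable on `D` and `dd^c v ∧ α ≥ 0` there in the sense of currents. This is
`α`-subharmonicity up to null sets, without the strong upper semicontinuity. -/
structure IsAlphaSubsolution (A : AlphaForm n) (D : Set (Cn n)) (v : Cn n → ℝ) : Prop where
  locallyIntegrableOn : LocallyIntegrableOn v D volume
  integral_nonneg : ∀ ω : Cn n → ℝ, ContDiff ℝ (⊤ : ℕ∞) ω → HasCompactSupport ω →
    tsupport ω ⊆ D → (∀ z, 0 ≤ ω z) → 0 ≤ ∫ z in D, v z * alphaOpR A ω z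

lemma IsSubmeanKernel.mul_sub_le {C K m r s c : ℝ} {a : Cn n} {ω : Cn n → ℝ} {B : Set (Cn n)}
    (hω : IsSubmeanKernel A C K m r s a ω) (hv : IsAlphaSubsolution A D v) (hK : 0 ≤ K)
    (hs : 0 < s) (hsr : s ≤ r) (hB : IsCompact B) (haB : closedBall a r ⊆ B) (hBD : B ⊆ D)
    (hc : c ≤ v a) :
    m * (v a - c) ≤ (∫ z in B, max (v z - c) 0 * max (alphaOpR A ω z) 0) +
      K * ((s ^ (2 * n))⁻¹ * ∫ z in closedBall a s, ‖v z - v a‖) := by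
  have : Fact (volume B < ⊤) := ⟨hB.measure_lt_top⟩
  have hωB : tsupport ω ⊆ B := hω.tsupport_subset.trans haB
  have hsupp : HasCompactSupport ω := hB.of_isClosed_subset (isClosed_tsupport ω) hωB
  have hcont : Continuous (alphaOpR A ω) :=
    A.continuous_alphaOpR (hω.contDiff.of_le (by norm_cast))
  have hzero {S : Set (Cn n)} (hS : B ⊆ S) (z : Cn n) (hz : z ∉ S) : alphaOpR A ω z = 0 :=
    A.alphaOpR_eq_zero_of_notMem_tsupport fun h => hz (hS (hωB h))
  obtain ⟨M, hM⟩ := (A.hasCompactSupport_alphaOpR hsupp).exists_bound_of_continuous hcont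
  have hvanish : ∫ z in B, alphaOpR A ω z = 0 := by
    rw [setIntegral_eq_integral_of_forall_compl_eq_zero (hzero le_rfl)]
    exact A.integral_alphaOpR (hω.contDiff.of_le (by norm_cast)) hsupp
  have hsub : 0 ≤ ∫ z in B, v z * alphaOpR A ω z := by
    have hvzero {S : Set (Cn n)} (hS : B ⊆ S) (z : Cn n) (hz : z ∉ S) : v z * alphaOpR A ω z = 0 :=
      by rw [hzero hS z hz, mul_zero]
    rw [setIntegral_eq_integral_of_forall_compl_eq_zero (hvzero le_rfl),
      ← setIntegral_eq_integral_of_forall_compl_eq_zero (hvzero hBD)]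
    exact hv.integral_nonneg ω hω.contDiff hsupp (hωB.trans hBD) hω.nonneg
  have hmass : m ≤ ∫ z in B, max (alphaOpR A ω z) 0 := by
    rw [setIntegral_eq_integral_of_forall_compl_eq_zero fun z hz => by
      rw [hzero le_rfl z hz, max_self]]
    exact hω.le_integral
  have hmain := mul_sub_le_integral_posPart_mul_add (μ := volume.restrict B)
    (hv.locallyIntegrableOn.integrableOn_compact_subset hBD hB) hcont.aestronglyMeasurable hM
    hvanish hsub hmass hω.neg_le_alphaOpR (by positivity) measurableSet_closedBall
    hω.alphaOpR_nonneg hc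
  rwa [Measure.restrict_restrict_of_subset ((closedBall_subset_closedBall hsr).trans haB),
    div_eq_mul_inv, mul_assoc] at hmain

lemma exists_forall_ae_mul_sub_le (A : AlphaForm n) (hn : n ≠ 0) (z₀ : Cn n) {r : ℝ}
    (hr : 0 < r) :
    ∃ C m : ℝ, 0 ≤ C ∧ 0 < m ∧ ∀ {D : Set (Cn n)} {v : Cn n → ℝ} {c M ρ : ℝ},
      closedBall z₀ (2 * r) ⊆ D → IsAlphaSubsolution A D v → 0 ≤ M →
      (∀ᵐ z ∂volume.restrict (closedBall z₀ (2 * r)), v z - c ≤ M) → 0 < ρ →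
      ∀ᵐ a ∂volume.restrict (ball z₀ r), c ≤ v a → m * (v a - c) ≤
        C * (M * (∫ z in ball (0 : Cn n) ρ, (‖z‖ ^ (2 * n - 1))⁻¹) +
          (ρ ^ (2 * n - 1))⁻¹ * ∫ z in closedBall z₀ (2 * r), max (v z - c) 0) := by
  obtain ⟨C, K, m, s₀, hC, hK, hm, hs₀, hkernel⟩ := A.exists_isSubmeanKernel hn z₀ hr
  refine ⟨C, m, hC, hm, fun {D v c M ρ} hD hv hM hvM hρ => ?_⟩
  have hB : IsCompact (closedBall z₀ (2 * r)) := isCompact_closedBall _ _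
  have hvB := hv.locallyIntegrableOn.integrableOn_compact_subset hD hB
  have hpos : IntegrableOn (fun z => max (v z - c) 0) (closedBall z₀ (2 * r)) :=
    (hvB.sub (integrableOn_const hB.measure_lt_top.ne)).pos_part
  have hvball := hvB.mono_set
    (ball_subset_closedBall.trans (closedBall_subset_closedBall (by linarith : r ≤ 2 * r)))
  filter_upwards [ae_tendsto_inv_pow_mul_setIntegral_norm_sub (isOpen_ball (x := z₀) (ε := r))
    hvball, ae_restrict_mem measurableSet_ball] with a hlebesgue ha hca
  rw [finrank_Cn] at hlebesgue
  have haB : closedBall a r ⊆ closedBall z₀ (2 * r) :=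
    closedBall_subset_closedBall' (by linarith [mem_ball.1 ha])
  have hlimit := (hlebesgue.const_mul K).const_add
    (C * (M * (∫ z in ball (0 : Cn n) ρ, (‖z‖ ^ (2 * n - 1))⁻¹) +
      (ρ ^ (2 * n - 1))⁻¹ * ∫ z in closedBall z₀ (2 * r), max (v z - c) 0))
  rw [mul_zero, add_zero] at hlimit
  refine ge_of_tendsto hlimit ?_
  filter_upwards [Ioo_mem_nhdsGT (lt_min hs₀ hr)] with s ⟨hs, hs'⟩
  obtain ⟨hss₀, hsr⟩ := lt_min_iff.1 hs'
  obtain ⟨ω, hω⟩ := hkernel a (ball_subset_closedBall ha) s hs hss₀.le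
  refine (hω.mul_sub_le hv hK hs hsr.le hB haB hD hca).trans (add_le_add_left ?_ _)
  exact setIntegral_mul_le_of_le_inv_norm_sub_pow (by rw [finrank_Cn]; omega) hpos
    (fun _ => le_max_right _ _) (hvM.mono fun z hz => max_le hz hM) hM
    (fun _ => le_max_right _ _) hC (fun z => max_le (hω.alphaOpR_le z) (by positivity)) hρ

theorem exists_forall_ae_le_add_mul_setIntegral_posPart (A : AlphaForm n) (hn : n ≠ 0)
    (z₀ : Cn n) {r δ M : ℝ} (hr : 0 < r) (hδ : 0 < δ) (hM : 0 ≤ M) :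
    ∃ Λ : ℝ, ∀ {D : Set (Cn n)} {v : Cn n → ℝ} {c : ℝ},
      closedBall z₀ (2 * r) ⊆ D → IsAlphaSubsolution A D v →
      (∀ᵐ z ∂volume.restrict (closedBall z₀ (2 * r)), v z - c ≤ M) →
      ∀ᵐ a ∂volume.restrict (ball z₀ r),
        v a ≤ c + δ + Λ * ∫ z in closedBall z₀ (2 * r), max (v z - c) 0 := by
  obtain ⟨C, m, hC, hm, hCm⟩ := exists_forall_ae_mul_sub_le A hn z₀ hr
  have hsmall : Tendsto (fun ρ => C * (M * ∫ z in ball (0 : Cn n) ρ, (‖z‖ ^ (2 * n - 1))⁻¹))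
      (𝓝[>] 0) (𝓝 0) := by
    simpa only [mul_zero] using ((tendsto_setIntegral_inv_norm_pow (E := Cn n)
      (μ := volume) (k := 2 * n - 1) (by rw [finrank_Cn]; omega)).const_mul M).const_mul C
  obtain ⟨ρ, hρδ, hρ⟩ := ((hsmall.eventually_le_const (mul_pos hm hδ)).and
    self_mem_nhdsWithin).exists
  replace hρ : 0 < ρ := hρ
  refine ⟨C * (ρ ^ (2 * n - 1))⁻¹ / m, fun {D v c} hD hv hvM => ?_⟩
  filter_upwards [hCm hD hv hM hvM hρ] with a ha
  rcases le_or_gt c (v a) with hca | hca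
  · refine le_of_mul_le_mul_left ?_ hm
    calc m * v a = m * c + m * (v a - c) := by ring
      _ ≤ m * c + (m * δ +
          C * ((ρ ^ (2 * n - 1))⁻¹ * ∫ z in closedBall z₀ (2 * r), max (v z - c) 0)) := by
        linarith [ha hca]
      _ = _ := by field_simp; ring
  · have : 0 ≤ ∫ z in closedBall z₀ (2 * r), max (v z - c) 0 :=
      integral_nonneg fun _ => le_max_right _ _
    have : 0 ≤ C * (ρ ^ (2 * n - 1))⁻¹ / m * ∫ z in closedBall z₀ (2 * r), max (v z - c) 0 := by
      positivity
    linarith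

end LocalMaximumPrinciple

section Hartogs

lemma tendsto_integral_posPart_sub {X : Type*} [MeasurableSpace X] {μ : Measure X}
    [IsFiniteMeasure μ] {v : ℕ → X → ℝ} {c M : ℝ} (hv : ∀ j, AEStronglyMeasurable (v j) μ)
    (hM : ∀ j, ∀ᵐ x ∂μ, v j x - c ≤ M) (hc : ∀ᵐ x ∂μ, ∀ᶠ j in atTop, v j x ≤ c) :
    Tendsto (fun j => ∫ x, max (v j x - c) 0 ∂μ) atTop (𝓝 0) := by
  suffices Tendsto (fun j => ∫ x, max (v j x - c) 0 ∂μ) atTop (𝓝 (∫ _, (0 : ℝ) ∂μ)) by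
    rwa [integral_zero] at this
  refine tendsto_integral_of_dominated_convergence (fun _ => max M 0)
    (fun j => ((hv j).sub aestronglyMeasurable_const).sup aestronglyMeasurable_const)
    (integrable_const _) (fun j => ?_) ?_
  · filter_upwards [hM j] with x hx
    rw [Real.norm_of_nonneg (le_max_right _ _)]
    exact max_le_max_right _ hx
  · filter_upwards [hc] with x hx
    refine tendsto_const_nhds.congr' ?_
    filter_upwards [hx] with j hj
    rw [max_eq_right (sub_nonpos.2 hj)]

variable {n : ℕ} {A : AlphaForm n} {D : Set (Cn n)}

namespace IsAlphaSubharmonicE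

lemma isAlphaSubsolution {u : Cn n → EReal} (hu : IsAlphaSubharmonicE A D u) :
    IsAlphaSubsolution A D fun z => (u z).toReal :=
  ⟨hu.2.2.2.1, hu.2.2.2.2⟩

lemma le_of_ae_le {u : Cn n → EReal} (hu : IsAlphaSubharmonicE A D u) {U : Set (Cn n)} {c : EReal}
    (hU : IsOpen U) (hUD : U ⊆ D) (hc : ∀ᵐ z ∂volume.restrict U, u z ≤ c) :
    ∀ z ∈ U, u z ≤ c := by
  intro z hz
  have hnull : volume (U \ {w | u w ≤ c}) = 0 :=
    ae_le_set.1 ((ae_restrict_iff' hU.measurableSet).1 hc)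
  rw [← hu.2.2.1 z (hUD hz) {w | u w ≤ c} ⟨U, hU.mem_nhds hz, hnull⟩]
  exact limsup_le_of_le (by isBoundedDefault) (eventually_mem_nhdsWithin.mono fun _ h => h)

lemma eventually_forall_mem_ball_le {u : ℕ → Cn n → EReal} {z₀ : Cn n} {r c δ M : ℝ} (hn : n ≠ 0)
    (hr : 0 < r) (hδ : 0 < δ) (hD : closedBall z₀ (2 * r) ⊆ D)
    (hu : ∀ j, IsAlphaSubharmonicE A D (u j))
    (hfin : ∀ j, ∀ᵐ z ∂volume.restrict (closedBall z₀ (2 * r)), u j z ≠ ⊥)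
    (hM : ∀ j, ∀ z ∈ closedBall z₀ (2 * r), u j z ≤ (M : EReal))
    (hc : ∀ᵐ z ∂volume.restrict (closedBall z₀ (2 * r)), ∀ᶠ j in atTop, u j z ≤ (c : EReal)) :
    ∀ᶠ j in atTop, ∀ z ∈ ball z₀ r, u j z ≤ ((c + δ : ℝ) : EReal) := by
  set B := closedBall z₀ (2 * r)
  have : Fact (volume B < ⊤) := ⟨measure_closedBall_lt_top⟩
  have htoReal {j : ℕ} {z : Cn n} {t : ℝ} (hz : u j z ≠ ⊥) (ht : u j z ≤ (t : EReal)) :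
      (u j z).toReal ≤ t := EReal.toReal_le_toReal ht hz (EReal.coe_ne_top t)
  have hvM (j : ℕ) : ∀ᵐ z ∂volume.restrict B, (u j z).toReal - c ≤ max (M - c) 0 := by
    filter_upwards [hfin j, ae_restrict_mem measurableSet_closedBall] with z hz hzB
    exact le_max_of_le_left (sub_le_sub_right (htoReal hz (hM j z hzB)) c)
  have hvc : ∀ᵐ z ∂volume.restrict B, ∀ᶠ j in atTop, (u j z).toReal ≤ c := by
    filter_upwards [hc, ae_all_iff.2 hfin] with z hz hzfin
    exact hz.mono fun j => htoReal (hzfin j)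
  have hv (j : ℕ) : IntegrableOn (fun z => (u j z).toReal) B :=
    (hu j).isAlphaSubsolution.locallyIntegrableOn.integrableOn_compact_subset hD
      (isCompact_closedBall _ _)
  obtain ⟨Λ, hΛ⟩ := exists_forall_ae_le_add_mul_setIntegral_posPart A hn z₀ hr (half_pos hδ)
    (le_max_right (M - c) 0)
  have hlim := (tendsto_integral_posPart_sub (fun j => (hv j).aestronglyMeasurable) hvM
    hvc).const_mul Λ
  rw [mul_zero] at hlim
  filter_upwards [hlim.eventually_le_const (half_pos hδ)] with j hj
  have hball : ball z₀ r ⊆ D :=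
    (ball_subset_closedBall.trans (closedBall_subset_closedBall (by linarith))).trans hD
  refine (hu j).le_of_ae_le isOpen_ball hball ?_
  filter_upwards [hΛ hD (hu j).isAlphaSubsolution (hvM j), ae_restrict_mem measurableSet_ball]
    with z hz hzr
  exact (EReal.le_coe_toReal ((hu j).1 z (hball hzr))).trans (EReal.coe_le_coe_iff.2 (by linarith))

end IsAlphaSubharmonicE

lemma eventually_le_of_limsup_le {x : ℕ → EReal} {b c : ℝ}
    (h : limsup x atTop ≤ (b : EReal)) (hbc : b < c) : ∀ᶠ j in atTop, x j ≤ (c : EReal) :=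
  (eventually_lt_of_limsup_lt (h.trans_lt (EReal.coe_lt_coe_iff.2 hbc))).mono fun _ => le_of_lt

theorem exists_mem_nhds_eventually_forall_le (hD : IsOpen D) {u : ℕ → Cn n → EReal}
    (hu : ∀ j, IsAlphaSubharmonicE A D (u j)) (hfin : ∀ j, ∀ᵐ z ∂volume.restrict D, u j z ≠ ⊥)
    (hbd : ∀ z ∈ D, ∃ N ∈ 𝓝 z, ∃ M : ℝ, ∀ j, ∀ w ∈ N ∩ D, u j w ≤ (M : EReal))
    {g : Cn n → ℝ} (hg : ContinuousOn g D)
    (hls : ∀ᵐ z ∂volume.restrict D, limsup (fun j => u j z) atTop ≤ (g z : EReal))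
    {z₀ : Cn n} (hz₀ : z₀ ∈ D) {ε : ℝ} (hε : 0 < ε) :
    ∃ U ∈ 𝓝 z₀, ∀ᶠ j in atTop, ∀ z ∈ U, u j z ≤ ((g z + ε : ℝ) : EReal) := by
  rcases eq_or_ne n 0 with rfl | hn
  · have : (ae (volume.restrict D)).NeBot :=
      ae_restrict_neBot.2 (hD.measure_pos volume ⟨z₀, hz₀⟩).ne'
    obtain ⟨z, hz⟩ := hls.exists
    refine ⟨Set.univ, univ_mem, ?_⟩
    filter_upwards [eventually_le_of_limsup_le hz (lt_add_of_pos_right _ hε)] with j hj w _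
    rwa [Subsingleton.elim w z]
  obtain ⟨N, hN, M, hM⟩ := hbd z₀ hz₀
  have hgz₀ : ∀ᶠ z in 𝓝 z₀, dist (g z) (g z₀) < ε / 3 :=
    Metric.tendsto_nhds.1 (hg.continuousAt (hD.mem_nhds hz₀)) _ (by positivity)
  obtain ⟨t, ht, hball⟩ := nhds_basis_closedBall.mem_iff.1
    (inter_mem (inter_mem hN (hD.mem_nhds hz₀)) hgz₀)
  obtain ⟨r, rfl⟩ : ∃ r, t = 2 * r := ⟨t / 2, by ring⟩
  have hr : 0 < r := by linarith
  have hBD : closedBall z₀ (2 * r) ⊆ D := fun z hz => (hball hz).1.2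
  have hgB {z : Cn n} (hz : z ∈ closedBall z₀ (2 * r)) : |g z - g z₀| < ε / 3 := (hball hz).2
  refine ⟨ball z₀ r, ball_mem_nhds _ hr, ?_⟩
  have hlocal := IsAlphaSubharmonicE.eventually_forall_mem_ball_le (c := g z₀ + ε / 3) hn hr
    (show 0 < ε / 3 by positivity) hBD hu
    (fun j => ae_restrict_of_ae_restrict_of_subset hBD (hfin j))
    (fun j z hz => hM j z (hball hz).1) ?_
  · filter_upwards [hlocal] with j hj z hz
    have hgz := hgB (closedBall_subset_closedBall (by linarith) (ball_subset_closedBall hz))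
    exact (hj z hz).trans (EReal.coe_le_coe_iff.2 (by linarith [(abs_lt.1 hgz).1]))
  · filter_upwards [ae_restrict_of_ae_restrict_of_subset hBD hls,
      ae_restrict_mem measurableSet_closedBall] with z hz hzB
    exact eventually_le_of_limsup_le hz (by linarith [(abs_lt.1 (hgB hzB)).2])

end Hartogs

theorem hartogs_lemma_alpha_general {n : ℕ} (A : AlphaForm n) (D : Set (Cn n)) (hDo : IsOpen D)
    (u : ℕ → Cn n → EReal) (hu : ∀ j, IsAlphaSubharmonicE A D (u j))
    (hfin : ∀ j, ∀ᵐ z ∂volume.restrict D, u j z ≠ ⊥)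
    (hbd : ∀ z ∈ D, ∃ N ∈ 𝓝 z, ∃ M : ℝ, ∀ j, ∀ w ∈ N ∩ D, u j w ≤ (M : EReal))
    (g : Cn n → ℝ) (hg : ContinuousOn g D)
    (hls : ∀ᵐ z ∂volume.restrict D, limsup (fun j => u j z) atTop ≤ (g z : EReal)) :
    ∀ K : Set (Cn n), IsCompact K → K ⊆ D → ∀ ε > (0 : ℝ),
      ∃ j₀ : ℕ, ∀ j ≥ j₀, ∀ z ∈ K, u j z ≤ ((g z + ε : ℝ) : EReal) := by
  intro K hK hKD ε hε
  rw [← eventually_atTop]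
  refine hK.induction_on (p := fun s => ∀ᶠ j in atTop, ∀ z ∈ s, u j z ≤ ((g z + ε : ℝ) : EReal))
    (by simp) (fun s t hst ht => ht.mono fun j hj z hz => hj z (hst hz))
    (fun s t hs ht => ?_) fun z hz => ?_
  · filter_upwards [hs, ht] with j hjs hjt z hz using hz.elim (hjs z) (hjt z)
  · obtain ⟨U, hU, h⟩ := exists_mem_nhds_eventually_forall_le hDo hu hfin hbd hg hls (hKD hz) hε
    exact ⟨U, mem_nhdsWithin_of_mem_nhds hU, h⟩

/-- **Hartogs lemma.** Let `u j` be a sequence of `α`-subharmonic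
functions on a domain `D ⊆ ℂⁿ`, locally uniformly bounded from above, with
`limsup_j u j z ≤ g z` for every `z ∈ D`, `g` continuous on `D`.  Then for every compact
`K ⊆ D` and `ε > 0` there is `j₀` with `u j z ≤ g z + ε` for all `z ∈ K`, `j ≥ j₀`. -/
theorem hartogs_lemma_alpha {n : ℕ} (A : AlphaForm n) (D : Set (Cn n))
    (hDo : IsOpen D) (hDc : IsConnected D)
    (u : ℕ → Cn n → ℝ) (hu : ∀ j, IsAlphaSubharmonic A D (u j))
    (hbd : ∀ z ∈ D, ∃ N ∈ 𝓝 z, ∃ M : ℝ, ∀ j, ∀ w ∈ N ∩ D, u j w ≤ M)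
    (g : Cn n → ℝ) (hg : ContinuousOn g D)
    (hls : ∀ z ∈ D, Filter.limsup (fun j => (u j z : EReal)) atTop ≤ (g z : EReal)) :
    ∀ K : Set (Cn n), IsCompact K → K ⊆ D → ∀ ε > (0 : ℝ),
      ∃ j₀ : ℕ, ∀ j ≥ j₀, ∀ z ∈ K, u j z ≤ g z + ε := by
  intro K hK hKD ε hε
  exact_mod_cast hartogs_lemma_alpha_general A D hDo (fun j z => u j z) hu
    (fun j => .of_forall fun z => EReal.coe_ne_bot _) (by exact_mod_cast hbd) g hg
    ((ae_restrict_iff' hDo.measurableSet).2 (.of_forall hls)) K hK hKD ε hε
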